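/- arXiv:2204.07006 — 3 statements merged into one kernel-verified Lean document; each statement's English description precedes it below -/
import Mathlib

section
/- Let A be a ring, M an A-module, and x = (x_1,...,x_n), u = (u_1,...,u_n) two sequences generating ideals J_x ⊆ J_u. If x is M-independent, then u is M-independent. -/
/-!
Let `T` be a matrix with `x = T u`, and let `d` be the differential of the Koszul complex
`K = ⋀(A^κ) ⊗ M` of `u`. Left multiplication `Yᵢ` by the `i`-th row of `T` is a homotopy for
multiplication by `xᵢ`: `d Yᵢ + Yᵢ d = xᵢ`. Given a cycle `z`, apply `d` to a congruence
`Yᵢ Y z ≡ 0` modulo `Jₓ K + d K`, where `Y` is a product of other `Yⱼ`, and compare the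
coefficients of `xᵢ`: as `x` is `K`-independent, `Y z ≡ 0`. So the `Yᵢ` can be stripped off one
at a time. If `z` has degree one, the product of all the `Yᵢ` kills `z`, because it lands in
degree `card ι + 1 > card κ`. Hence `z ∈ Jₓ K + d K ⊆ Jᵤ K`, and a relation `∑ uₖ mₖ = 0` is
precisely the statement that `∑ eₖ ⊗ mₖ` is such a cycle.
-/

open TensorProduct

/-- The family `x` is `M`-independent: the coefficients of every relation `∑ xᵢ mᵢ = 0` in `M` lie
in `(x) M`. For `M = A` this is independence in the sense of Lech. -/
def IsIndependent {ι A : Type*} [Fintype ι] [CommRing A] (M : Type*) [AddCommGroup M] [Module A M]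
    (x : ι → A) : Prop :=
  ∀ m : ι → M, ∑ i, x i • m i = 0 →
    ∀ i, m i ∈ Ideal.span (Set.range x) • (⊤ : Submodule A M)

section SpanSMul

variable {ι A M N : Type*} [CommRing A] [AddCommGroup M] [Module A M] [AddCommGroup N] [Module A N]

theorem map_mem_smul_top (f : M →ₗ[A] N) {I : Ideal A} {m : M}
    (hm : m ∈ I • (⊤ : Submodule A M)) : f m ∈ I • (⊤ : Submodule A N) :=
  Submodule.smul_top_le_comap_smul_top I f hm

theorem exists_sum_eq_of_mem_span_image_smul_top [Fintype ι] {x : ι → A} {s : Set ι} {m : M}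
    (hm : m ∈ Ideal.span (x '' s) • (⊤ : Submodule A M)) :
    ∃ w : ι → M, (∀ i ∉ s, w i = 0) ∧ ∑ i, x i • w i = m := by
  classical
  rw [← Submodule.span_univ, Ideal.span, Submodule.span_smul_span] at hm
  induction hm using Submodule.span_induction with
  | mem m hm =>
    obtain ⟨_, ⟨i, hi, rfl⟩, w, -, rfl⟩ := hm
    refine ⟨Pi.single i w, fun j hj => ?_, by simp [Pi.single_apply]⟩
    simp [(ne_of_mem_of_not_mem hi hj).symm]
  | zero => exact ⟨0, fun _ _ => rfl, by simp⟩
  | add _ _ _ _ hm hm' =>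
    obtain ⟨w, hw, rfl⟩ := hm
    obtain ⟨w', hw', rfl⟩ := hm'
    exact ⟨w + w', fun i hi => by simp [hw i hi, hw' i hi], by simp [Finset.sum_add_distrib]⟩
  | smul a _ _ hm =>
    obtain ⟨w, hw, rfl⟩ := hm
    exact ⟨a • w, fun i hi => by simp [hw i hi], by simp [Finset.smul_sum, smul_comm a]⟩

theorem exists_smul_add_eq_of_mem_span_range_smul_top {x : ι → A} (i : ι) {m : M}
    (hm : m ∈ Ideal.span (Set.range x) • (⊤ : Submodule A M)) :
    ∃ w, ∃ b ∈ Ideal.span (x '' {i}ᶜ) • (⊤ : Submodule A M), x i • w + b = m := by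
  rw [← Set.image_univ, ← Set.union_compl_self {i}, Set.image_union, Set.image_singleton,
    Ideal.span_union, Submodule.sup_smul, Submodule.ideal_span_singleton_smul] at hm
  obtain ⟨a, ha, b, hb, rfl⟩ := Submodule.mem_sup.1 hm
  obtain ⟨w, -, rfl⟩ := Submodule.mem_smul_pointwise_iff_exists _ _ _ |>.1 ha
  exact ⟨w, b, hb, rfl⟩

end SpanSMul

namespace IsIndependent

variable {ι A M : Type*} [Fintype ι] [CommRing A] [AddCommGroup M] [Module A M] {x : ι → A}

theorem mem_of_smul_mem (hx : IsIndependent M x) {i : ι} {m : M}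
    (hm : x i • m ∈ Ideal.span (x '' {i}ᶜ) • (⊤ : Submodule A M)) :
    m ∈ Ideal.span (Set.range x) • (⊤ : Submodule A M) := by
  classical
  obtain ⟨w, hw, hsum⟩ := exists_sum_eq_of_mem_span_image_smul_top hm
  have hrel : ∑ j, x j • (Pi.single i m - w : ι → M) j = 0 := by
    simp [smul_sub, hsum, Pi.single_apply]
  simpa [hw i (by simp)] using hx _ hrel i

theorem finsupp (hx : IsIndependent M x) (σ : Type*) : IsIndependent (σ →₀ M) x := by
  intro m hm i
  have hcoeff (s : σ) : m i s ∈ Ideal.span (Set.range x) • (⊤ : Submodule A M) :=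
    hx (fun i => m i s) (by simpa using DFunLike.congr_fun hm s) i
  rw [← (m i).sum_single]
  exact Submodule.sum_mem _ fun s _ => map_mem_smul_top (Finsupp.lsingle s) (hcoeff s)

theorem of_linearEquiv {N : Type*} [AddCommGroup N] [Module A N] (hx : IsIndependent M x)
    (e : M ≃ₗ[A] N) : IsIndependent N x := by
  intro n hn i
  have hrel : ∑ i, x i • e.symm (n i) = 0 := by
    simpa only [map_sum, map_smul, map_zero] using congrArg e.symm hn
  simpa using map_mem_smul_top e.toLinearMap (hx _ hrel i)

theorem tensorProduct (hx : IsIndependent M x) (F : Type*) [AddCommGroup F] [Module A F]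
    [Module.Free A F] : IsIndependent (F ⊗[A] M) x := by
  classical
  exact (hx.finsupp _).of_linearEquiv
    (TensorProduct.equivFinsuppOfBasisLeft (Module.Free.chooseBasis A F)).symm

end IsIndependent

section Homotopy

variable {ι A K : Type*} [CommRing A] [AddCommGroup K] [Module A K] {x : ι → A}
  {d : Module.End A K} {Y : ι → Module.End A K}

theorem differential_prod_homotopies_mem (hY : ∀ i z, d (Y i z) = x i • z - Y i (d z)) {z : K}
    (hz : d z = 0) {i : ι} {l : List ι} (hi : i ∉ l) :
    d ((l.map Y).prod z) ∈ Ideal.span (x '' {i}ᶜ) • (⊤ : Submodule A K) := by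
  induction l with
  | nil => simp [hz]
  | cons j l ih =>
    obtain ⟨hij, hil⟩ := not_or.1 (List.mem_cons.not.1 hi)
    have hxj : x j ∈ Ideal.span (x '' {i}ᶜ) := Ideal.subset_span ⟨j, Ne.symm hij, rfl⟩
    rw [List.map_cons, List.prod_cons, Module.End.mul_apply, hY]
    exact sub_mem (Submodule.smul_mem_smul hxj trivial) (map_mem_smul_top (Y j) (ih hil))

theorem IsIndependent.mem_of_homotopy_mem [Fintype ι] (hx : IsIndependent K x)
    (hd : ∀ z, d (d z) = 0) {i : ι} {h : Module.End A K}
    (hh : ∀ z, d (h z) = x i • z - h (d z)) {z : K}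
    (hdz : d z ∈ Ideal.span (x '' {i}ᶜ) • (⊤ : Submodule A K))
    (hz : h z ∈ Ideal.span (Set.range x) • ⊤ ⊔ LinearMap.range d) :
    z ∈ Ideal.span (Set.range x) • ⊤ ⊔ LinearMap.range d := by
  obtain ⟨a, ha, _, ⟨v, rfl⟩, hav⟩ := Submodule.mem_sup.1 hz
  obtain ⟨w, b, hb, rfl⟩ := exists_smul_add_eq_of_mem_span_range_smul_top i ha
  have hcompare : x i • (z - d w) = h (d z) + d b := by
    have hdhz : x i • d w + d b = x i • z - h (d z) := by
      rw [← hh, ← hav, map_add, hd, add_zero, map_add, map_smul]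
    rw [smul_sub, eq_add_of_sub_eq hdhz.symm]
    abel
  have hzw : z - d w ∈ Ideal.span (Set.range x) • (⊤ : Submodule A K) :=
    hx.mem_of_smul_mem (hcompare ▸ add_mem (map_mem_smul_top h hdz) (map_mem_smul_top d hb))
  exact Submodule.mem_sup.2 ⟨_, hzw, _, ⟨w, rfl⟩, sub_add_cancel z (d w)⟩

theorem IsIndependent.mem_of_prod_homotopies_mem [Fintype ι] (hx : IsIndependent K x)
    (hd : ∀ z, d (d z) = 0) (hY : ∀ i z, d (Y i z) = x i • z - Y i (d z)) {z : K} (hz : d z = 0)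
    {l : List ι} (hl : l.Nodup)
    (hlz : (l.map Y).prod z ∈ Ideal.span (Set.range x) • ⊤ ⊔ LinearMap.range d) :
    z ∈ Ideal.span (Set.range x) • ⊤ ⊔ LinearMap.range d := by
  induction l with
  | nil => simpa using hlz
  | cons i l ih =>
    obtain ⟨hil, hl⟩ := List.nodup_cons.1 hl
    rw [List.map_cons, List.prod_cons, Module.End.mul_apply] at hlz
    exact ih hl (hx.mem_of_homotopy_mem hd (hY i) (differential_prod_homotopies_mem hY hz hil) hlz)

end Homotopy

section ExteriorAlgebra

variable {κ A V : Type*} [CommRing A] [AddCommGroup V] [Module A V]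

theorem free_exteriorAlgebra [Module.Free A V] : Module.Free A (ExteriorAlgebra A V) := by
  classical
  let : LinearOrder (Module.Free.ChooseBasisIndex A V) := linearOrderOfSTO WellOrderingRel
  exact Module.Free.of_basis (Module.Free.chooseBasis A V).ExteriorAlgebra

theorem alternatingMap_eq_zero_of_card_lt [Fintype κ] {ι N : Type*} [Fintype ι] [AddCommGroup N]
    [Module A N] (b : Module.Basis κ A V) (h : Fintype.card κ < Fintype.card ι)
    (f : V [⋀^ι]→ₗ[A] N) : f = 0 :=
  b.ext_alternating fun v hv => absurd (Fintype.card_le_of_injective v hv) h.not_ge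

theorem prod_map_ι_eq_zero_of_card_lt [Fintype κ] (b : Module.Basis κ A V) {l : List V}
    (h : Fintype.card κ < l.length) : (l.map (ExteriorAlgebra.ι A)).prod = 0 := by
  have hprod : (l.map (ExteriorAlgebra.ι A)).prod = ExteriorAlgebra.ιMulti A l.length l.get := by
    rw [ExteriorAlgebra.ιMulti_apply, List.ofFn_comp', List.ofFn_get]
  have hzero : ExteriorAlgebra.ιMulti A l.length = (0 : V [⋀^Fin l.length]→ₗ[A] _) :=
    alternatingMap_eq_zero_of_card_lt b (by rwa [Fintype.card_fin]) _
  rw [hprod, hzero, AlternatingMap.zero_apply]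

end ExteriorAlgebra

section Koszul

variable {κ A V : Type*} [CommRing A] [AddCommGroup V] [Module A V]
  (M : Type*) [AddCommGroup M] [Module A M]

/-- The differential of the Koszul complex `⋀ V ⊗ M` of a linear form `φ` on `V`, as an
endomorphism of the total module: contraction with `φ` on the exterior algebra. The Koszul complex
of a finite sequence `u` is that of the linear form `eₖ ↦ uₖ` on `κ → A`. -/
noncomputable def koszulDifferential :
    Module.Dual A V →ₗ[A] Module.End A (ExteriorAlgebra A V ⊗[A] M) :=
  LinearMap.rTensorHom M ∘ₗ CliffordAlgebra.contractLeft (Q := (0 : QuadraticForm A V))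

variable {M}

theorem koszulDifferential_ι_tmul (φ : Module.Dual A V) (v : V) (m : M) :
    koszulDifferential M φ (ExteriorAlgebra.ι A v ⊗ₜ m) = 1 ⊗ₜ (φ v • m) := by
  have hcontract := CliffordAlgebra.contractLeft_ι (0 : QuadraticForm A V) φ v
  rw [Algebra.algebraMap_eq_smul_one] at hcontract
  rw [← TensorProduct.smul_tmul]
  exact congrArg (· ⊗ₜ[A] m) hcontract

theorem koszulDifferential_koszulDifferential (φ : Module.Dual A V)
    (z : ExteriorAlgebra A V ⊗[A] M) :
    koszulDifferential M φ (koszulDifferential M φ z) = 0 := by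
  induction z with
  | zero => simp only [map_zero]
  | add _ _ hz hz' => simp only [map_add, hz, hz', add_zero]
  | tmul e m =>
    exact (congrArg (· ⊗ₜ[A] m) (CliffordAlgebra.contractLeft_contractLeft φ e)).trans
      (TensorProduct.zero_tmul _ m)

theorem koszulDifferential_ι_smul (φ : Module.Dual A V) (v : V)
    (z : ExteriorAlgebra A V ⊗[A] M) :
    koszulDifferential M φ (ExteriorAlgebra.ι A v • z) =
      φ v • z - ExteriorAlgebra.ι A v • koszulDifferential M φ z := by
  induction z with
  | zero => simp only [smul_zero, map_zero, sub_zero]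
  | add _ _ hz hz' => simp only [smul_add, map_add, hz, hz', add_sub_add_comm]
  | tmul e m =>
    exact (congrArg (· ⊗ₜ[A] m) (CliffordAlgebra.contractLeft_ι_mul φ v e)).trans
      (TensorProduct.sub_tmul _ _ m)

theorem range_koszulDifferential_le [Fintype κ] (u : κ → A) :
    LinearMap.range (koszulDifferential M (Fintype.linearCombination A u)) ≤
      Ideal.span (Set.range u) • ⊤ := by
  classical
  have hφ : Fintype.linearCombination A u = ∑ k, u k • LinearMap.proj (φ := fun _ => A) k := by
    ext
    simp [Pi.single_apply]
  rintro _ ⟨z, rfl⟩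
  rw [hφ, map_sum, LinearMap.sum_apply]
  refine Submodule.sum_mem _ fun k _ => ?_
  rw [map_smul, LinearMap.smul_apply]
  exact Submodule.smul_mem_smul (Ideal.subset_span (Set.mem_range_self k)) trivial

theorem prod_lsmul_ι_rTensor_ι_eq_zero [Fintype κ] {ι : Type*} (b : Module.Basis κ A V)
    (T : ι → V) {l : List ι} (h : Fintype.card κ ≤ l.length) (y : V ⊗[A] M) :
    (l.map fun i => Algebra.lsmul A A (ExteriorAlgebra A V ⊗[A] M) (ExteriorAlgebra.ι A (T i))).prod
      ((ExteriorAlgebra.ι A).rTensor M y) = 0 := by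
  have hlsmul : (l.map fun i => Algebra.lsmul A A (ExteriorAlgebra A V ⊗[A] M)
      (ExteriorAlgebra.ι A (T i))).prod =
        Algebra.lsmul A A _ ((l.map T).map (ExteriorAlgebra.ι A)).prod := by
    simp only [map_list_prod, List.map_map, Function.comp_def]
  rw [hlsmul]
  induction y with
  | zero => simp only [map_zero]
  | add _ _ hy hy' => simp only [map_add, hy, hy', add_zero]
  | tmul v m =>
    have hprod : ((l.map T).map (ExteriorAlgebra.ι A)).prod * ExteriorAlgebra.ι A v = 0 := by
      simpa using prod_map_ι_eq_zero_of_card_lt b (l := l.map T ++ [v])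
        (by simpa using Nat.lt_succ_of_le h)
    simp only [LinearMap.rTensor_tmul, Algebra.lsmul_coe, TensorProduct.smul_tmul', smul_eq_mul,
      hprod, TensorProduct.zero_tmul]

theorem IsIndependent.rTensor_ι_mem_of_koszulDifferential_eq_zero {ι : Type*} [Fintype ι]
    [Fintype κ] (b : Module.Basis κ A V) (hcard : Fintype.card κ ≤ Fintype.card ι) {x : ι → A}
    (hx : IsIndependent M x) {φ : Module.Dual A V} (hφ : ∀ i, x i ∈ LinearMap.range φ)
    {y : V ⊗[A] M} (hy : koszulDifferential M φ ((ExteriorAlgebra.ι A).rTensor M y) = 0) :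
    (ExteriorAlgebra.ι A).rTensor M y ∈
      Ideal.span (Set.range x) • ⊤ ⊔ LinearMap.range (koszulDifferential M φ) := by
  choose T hT using hφ
  have := Module.Free.of_basis b
  have := free_exteriorAlgebra (A := A) (V := V)
  have hkill := prod_lsmul_ι_rTensor_ι_eq_zero b T (l := Finset.univ.toList)
    (hcard.trans_eq Finset.univ.length_toList.symm) y
  exact (hx.tensorProduct _).mem_of_prod_homotopies_mem (koszulDifferential_koszulDifferential φ)
    (fun i z => hT i ▸ koszulDifferential_ι_smul φ (T i) z) hy Finset.univ.nodup_toList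
    (hkill ▸ zero_mem _)

theorem mem_smul_top_of_rTensor_ι_mem [Fintype κ] [DecidableEq κ] {I : Ideal A} {m : κ → M}
    (h : (ExteriorAlgebra.ι A).rTensor M (∑ k, Pi.single k (1 : A) ⊗ₜ m k) ∈
      I • (⊤ : Submodule A (ExteriorAlgebra A (κ → A) ⊗[A] M))) (k : κ) :
    m k ∈ I • (⊤ : Submodule A M) := by
  let coeff : ExteriorAlgebra A (κ → A) ⊗[A] M →ₗ[A] M :=
    TensorProduct.lid A M ∘ₗ (LinearMap.proj k ∘ₗ ExteriorAlgebra.ιInv).rTensor M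
  have hcoeff :
      coeff ((ExteriorAlgebra.ι A).rTensor M (∑ k, Pi.single k (1 : A) ⊗ₜ m k)) = m k := by
    simp [coeff, ExteriorAlgebra.ι_leftInverse _, Pi.single_apply, ite_smul]
  exact hcoeff ▸ map_mem_smul_top coeff h

end Koszul

theorem independent_of_le_general {ι κ A M : Type*} [Fintype ι] [Fintype κ] [CommRing A]
    [AddCommGroup M] [Module A M] {x : ι → A} {u : κ → A}
    (hcard : Fintype.card κ ≤ Fintype.card ι)
    (hsub : Ideal.span (Set.range x) ≤ Ideal.span (Set.range u)) (hx : IsIndependent M x) :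
    IsIndependent M u := by
  classical
  intro m hm
  let φ := Fintype.linearCombination A u
  have hφ (i : ι) : x i ∈ LinearMap.range φ :=
    Ideal.mem_span_range_iff_exists_fun.1 (hsub (Ideal.subset_span (Set.mem_range_self i)))
  let y : (κ → A) ⊗[A] M := ∑ k, Pi.single k 1 ⊗ₜ m k
  have hcycle : koszulDifferential M φ ((ExteriorAlgebra.ι A).rTensor M y) = 0 := by
    simp only [y, φ, map_sum, LinearMap.rTensor_tmul, koszulDifferential_ι_tmul,
      Fintype.linearCombination_apply_single, smul_eq_mul, one_mul, ← TensorProduct.tmul_sum, hm,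
      TensorProduct.tmul_zero]
  have hy := hx.rTensor_ι_mem_of_koszulDifferential_eq_zero (Pi.basisFun A κ) hcard hφ hcycle
  exact mem_smul_top_of_rTensor_ι_mem
    (sup_le (Submodule.smul_mono_left hsub) (range_koszulDifferential_le u) hy)

/-- If `x` is `M`-independent and the ideal generated by `x` is contained in the ideal
generated by `u` (sequences of the same length `n`), then `u` is `M`-independent. -/
theorem independent_of_le
    {A : Type} [CommRing A] {M : Type} [AddCommGroup M] [Module A M]
    {n : ℕ} (x u : Fin n → A)
    (hsub : Ideal.span (Set.range x) ≤ Ideal.span (Set.range u))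
    (hind : ∀ m : Fin n → M, (∑ i, x i • m i) = 0 →
      ∀ i, m i ∈ Ideal.span (Set.range x) • (⊤ : Submodule A M)) :
    ∀ m : Fin n → M, (∑ i, u i • m i) = 0 →
      ∀ i, m i ∈ Ideal.span (Set.range u) • (⊤ : Submodule A M) :=
  independent_of_le_general le_rfl hsub hind
end

section
/- Let A be a ring, M an A-module, x = (x_1,...,x_n) an M-independent sequence, u = (u_1,...,u_n) a sequence, and W an n×n matrix over A with x = uW (as row vectors). Let Δ = det W, J_x = (x_1,...,x_n), J_u = (u_1,...,u_n). Then the set of m ∈ M with J_u·m ⊆ J_x M equals (J_x + (Δ))M, and the set of m ∈ M with Δm ∈ J_x M and J_x m ⊆ J_x M equals J_u M. -/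
/-!
The submodule `Jₓ M` is the image of `m ↦ ∑ xᵢ mᵢ`, so alternating maps on a free module with
values in `Jₓ M` have the form `∑ xᵢ θᵢ`, and comparing coefficients of such expressions is
legitimate modulo `Jₓ M` when `x` is `M`-independent. Both contraction with the vector `u` and
exterior multiplication by the covector `u` square to zero, and pulling back along `W` turns `u`
into `x = uW`.

If `Δ m ∈ Jₓ M`, the alternating map `v ↦ det (v W) m` of top degree is zero modulo `Jₓ M`.
Contracting with `u` and comparing coefficients of the `xᵢ` removes one column at a time from the
determinant, and shows that each map `v ↦ (minor of v W) m` is a contraction with `u` modulo `Jₓ M`.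
In degree zero this says `m ∈ Jᵤ M`.

Dually, if `Jᵤ m ⊆ Jₓ M`, start with the constant `m` in degree zero. Multiplying by `u` and
comparing coefficients adds one column at a time, and shows that each map `v ↦ (minor of v) m` is a
pullback along `W` modulo `Jₓ M`. In top degree this says `m ∈ Δ M + Jₓ M`.
-/

open Module
open scoped Matrix

section IndependentSequence

variable {ι A M : Type*} [CommRing A] [AddCommGroup M] [Module A M]

/-- The submodule `Jₓ M`, where `Jₓ` is the ideal generated by the entries of `x`. -/
abbrev spanSMulTop (M : Type*) [AddCommGroup M] [Module A M] (x : ι → A) : Submodule A M :=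
  Ideal.span (Set.range x) • ⊤

/-- `M`-independence of a finite sequence `x`, also known as independence in the sense of Lech. -/
def IsModuleIndependent [Fintype ι] (M : Type*) [AddCommGroup M] [Module A M] (x : ι → A) : Prop :=
  ∀ m : ι → M, ∑ i, x i • m i = 0 → ∀ i, m i ∈ spanSMulTop M x

theorem smul_mem_spanSMulTop (x : ι → A) (i : ι) (m : M) : x i • m ∈ spanSMulTop M x :=
  Submodule.smul_mem_smul (Ideal.subset_span (Set.mem_range_self i)) trivial

theorem range_sum_smul_proj [Fintype ι] (x : ι → A) :
    LinearMap.range (∑ i, x i • (LinearMap.proj i : (ι → M) →ₗ[A] M)) = spanSMulTop M x := by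
  classical
  apply le_antisymm
  · rintro _ ⟨m, rfl⟩
    simpa using Submodule.sum_mem _ fun i _ ↦ smul_mem_spanSMulTop x i (m i)
  · rw [spanSMulTop, ← Submodule.span_univ, Submodule.span_smul_span, Submodule.span_le]
    rintro _ ⟨_, ⟨i, rfl⟩, m, -, rfl⟩
    exact ⟨Pi.single i m, by simp [Pi.single_apply]⟩

theorem IsModuleIndependent.sub_mem [Fintype ι] {x : ι → A} (hx : IsModuleIndependent M x)
    {m m' : ι → M} (h : ∑ i, x i • m i = ∑ i, x i • m' i) (i : ι) :
    m i - m' i ∈ spanSMulTop M x :=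
  hx (fun i ↦ m i - m' i) (by simp [smul_sub, h]) i

end IndependentSequence

section AlternatingMap

variable {A F F' M M' : Type*} [CommRing A] [AddCommGroup F] [Module A F] [AddCommGroup F']
  [Module A F'] [AddCommGroup M] [Module A M] [AddCommGroup M'] [Module A M'] {k : ℕ}

theorem exists_compAlternatingMap_eq [Module.Free A F] (h : M' →ₗ[A] M) (f : F [⋀^Fin k]→ₗ[A] M)
    (hf : ∀ v, f v ∈ LinearMap.range h) :
    ∃ f' : F [⋀^Fin k]→ₗ[A] M', h.compAlternatingMap f' = f := by
  let g := exteriorPower.alternatingMapLinearEquiv f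
  have hg (t) : g t ∈ LinearMap.range h := by
    suffices ⊤ ≤ (LinearMap.range h).comap g from this trivial
    rw [← exteriorPower.ιMulti_span, Submodule.span_le]
    rintro _ ⟨v, rfl⟩
    simpa [g] using hf v
  obtain ⟨g', hg'⟩ := projective_lifting_property h.rangeRestrict (g.codRestrict _ hg)
    h.surjective_rangeRestrict
  refine ⟨g'.compAlternatingMap (exteriorPower.ιMulti A k), AlternatingMap.ext fun v ↦ ?_⟩
  simpa [g] using congr(($hg' (exteriorPower.ιMulti A k v)).1)

theorem alternatingMap_sum_apply {ι κ : Type*} (s : Finset κ) (f : κ → F [⋀^ι]→ₗ[A] M) (v : ι → F) :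
    (∑ i ∈ s, f i) v = ∑ i ∈ s, f i v :=
  map_sum (⟨⟨fun g ↦ g v, rfl⟩, fun _ _ ↦ rfl⟩ : (F [⋀^ι]→ₗ[A] M) →+ M) f s

theorem exists_sum_smul_eq_of_mem_spanSMulTop {ι : Type*} [Fintype ι] [Module.Free A F] {x : ι → A}
    {f : F [⋀^Fin k]→ₗ[A] M} (hf : ∀ v, f v ∈ spanSMulTop M x) :
    ∃ θ : ι → F [⋀^Fin k]→ₗ[A] M, f = ∑ i, x i • θ i := by
  obtain ⟨f', rfl⟩ := exists_compAlternatingMap_eq (∑ i, x i • (LinearMap.proj i : (ι → M) →ₗ[A] M))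
    f (by simpa only [range_sum_smul_proj] using hf)
  refine ⟨fun i ↦ (LinearMap.proj i).compAlternatingMap f', AlternatingMap.ext fun v ↦ ?_⟩
  simp [alternatingMap_sum_apply]

theorem alternatingMap_apply_eq_det_smul {ι : Type*} [Fintype ι] [DecidableEq ι] (e : Basis ι A F)
    (f : F [⋀^ι]→ₗ[A] M) (v : ι → F) : f v = e.det v • f e := by
  suffices f = e.det.smulRight (f e) from congr($this v)
  refine Basis.ext_alternating e fun i hi ↦ ?_
  let σ := Equiv.ofBijective i (Finite.injective_iff_bijective.1 hi)
  change f (e ∘ σ) = e.det.smulRight (f e) (e ∘ σ)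
  simp [AlternatingMap.map_perm, Basis.det_self]

theorem alternatingMap_mulVec_single {n : ℕ} (f : (Fin n → A) [⋀^Fin n]→ₗ[A] M)
    (W : Matrix (Fin n) (Fin n) A) :
    f (fun i ↦ W *ᵥ Pi.single i 1) = W.det • f fun i ↦ Pi.single i 1 := by
  have h := alternatingMap_apply_eq_det_smul (Pi.basisFun A (Fin n)) f
    (W.mulVecLin ∘ Pi.basisFun A (Fin n))
  rw [Basis.det_comp, Basis.det_self, mul_one, ← Matrix.toLin'_apply', LinearMap.det_toLin'] at h
  simpa [Function.comp_def, funext (Pi.basisFun_apply A (Fin n))] using h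

/-- Left exterior multiplication of alternating maps by a covector:
`(φ ∧ f) v = ∑ i, (-1) ^ i • φ (v i) • f (v₀, …, v̂ᵢ, …, vₖ)`. -/
def dualWedge : Dual A F →ₗ[A] (F [⋀^Fin k]→ₗ[A] M) →ₗ[A] F [⋀^Fin (k + 1)]→ₗ[A] M :=
  LinearMap.smulRightₗ.compr₂ AlternatingMap.alternatizeUncurryFinLM

theorem dualWedge_apply (φ : Dual A F) (f : F [⋀^Fin k]→ₗ[A] M) (v : Fin (k + 1) → F) :
    dualWedge φ f v = ∑ i : Fin (k + 1), (-1 : A) ^ (i : ℕ) • φ (v i) • f (i.removeNth v) := by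
  simp [dualWedge, AlternatingMap.alternatizeUncurryFin_apply, ← Int.cast_smul_eq_zsmul A]

theorem dualWedge_dualWedge_self (φ : Dual A F) (f : F [⋀^Fin k]→ₗ[A] M) :
    dualWedge φ (dualWedge φ f) = 0 := by
  have h := AlternatingMap.alternatizeUncurryFin_alternatizeUncurryFinLM_comp_of_symmetric
    (f := φ.smulRight (φ.smulRight f)) fun v w ↦ by ext; simp [smul_comm (φ v)]
  have hφ : AlternatingMap.alternatizeUncurryFinLM ∘ₗ φ.smulRight (φ.smulRight f) =
      φ.smulRight (dualWedge φ f) :=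
    LinearMap.ext fun v ↦ by simp [dualWedge]
  rw [hφ] at h
  exact h

theorem dualWedge_mem {N : Submodule A M} (φ : Dual A F) {f : F [⋀^Fin k]→ₗ[A] M}
    (hf : ∀ v, f v ∈ N) (v : Fin (k + 1) → F) : dualWedge φ f v ∈ N := by
  rw [dualWedge_apply]
  exact N.sum_mem fun i _ ↦ N.smul_mem _ (N.smul_mem _ (hf _))

theorem dualWedge_compLinearMap (φ : Dual A F) (f : F [⋀^Fin k]→ₗ[A] M) (g : F' →ₗ[A] F) :
    (dualWedge φ f).compLinearMap g = dualWedge (φ ∘ₗ g) (f.compLinearMap g) := by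
  ext v
  simp only [AlternatingMap.compLinearMap_apply, dualWedge_apply, LinearMap.comp_apply]
  rfl

end AlternatingMap

section ModuloSpan

variable {ι A F M : Type*} [Fintype ι] [CommRing A] [AddCommGroup F] [Module A F] [Module.Free A F]
  [AddCommGroup M] [Module A M] {k : ℕ} {x : ι → A}

theorem IsModuleIndependent.exists_sub_curryLeft_mem (hx : IsModuleIndependent M x) {u : F}
    {f : F [⋀^Fin (k + 1)]→ₗ[A] M} {g : F [⋀^Fin (k + 2)]→ₗ[A] M}
    (hfg : ∀ v, f v - g.curryLeft u v ∈ spanSMulTop M x) {c : ι → F [⋀^Fin k]→ₗ[A] M}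
    (hc : f.curryLeft u = ∑ i, x i • c i) (i : ι) :
    ∃ g' : F [⋀^Fin (k + 1)]→ₗ[A] M, ∀ v, c i v - g'.curryLeft u v ∈ spanSMulTop M x := by
  obtain ⟨θ, hθ⟩ := exists_sum_smul_eq_of_mem_spanSMulTop (f := f - g.curryLeft u) hfg
  refine ⟨θ i, fun v ↦ hx.sub_mem (m := (c · v)) (m' := fun j ↦ (θ j).curryLeft u v) ?_ i⟩
  calc ∑ j, x j • c j v = f.curryLeft u v := by simp [hc, alternatingMap_sum_apply]
    _ = (f - g.curryLeft u).curryLeft u v := by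
      simp [show g (Matrix.vecCons u (Matrix.vecCons u v)) = 0 from
        congr($(AlternatingMap.curryLeft_same g u) v)]
    _ = ∑ j, x j • (θ j).curryLeft u v := by simp [hθ, alternatingMap_sum_apply]

theorem IsModuleIndependent.exists_dualWedge_eq_sum (hx : IsModuleIndependent M x) {φ : Dual A F}
    {f : F [⋀^Fin k]→ₗ[A] M} (hf : ∀ v, dualWedge φ f v ∈ spanSMulTop M x) :
    ∃ θ : ι → F [⋀^Fin (k + 1)]→ₗ[A] M, dualWedge φ f = ∑ i, x i • θ i ∧
      ∀ i v, dualWedge φ (θ i) v ∈ spanSMulTop M x := by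
  obtain ⟨θ, hθ⟩ := exists_sum_smul_eq_of_mem_spanSMulTop hf
  refine ⟨θ, hθ, fun i v ↦ hx (fun j ↦ dualWedge φ (θ j) v) ?_ i⟩
  simpa [hθ, alternatingMap_sum_apply] using congr($(dualWedge_dualWedge_self φ f) v)

end ModuloSpan

section Minor

variable {ι κ A M : Type*} [CommRing A] [AddCommGroup M] [Module A M] {k : ℕ}

/-- The alternating map sending the `k` rows of a matrix to `δ • m`, where `δ` is the `k × k` minor
with columns `L`. -/
def minorForm (L : Fin k → ι) (m : M) : (ι → A) [⋀^Fin k]→ₗ[A] M :=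
  (Matrix.detRowAlternating.compLinearMap (LinearMap.funLeft A A L)).smulRight m

theorem minorForm_apply (L : Fin k → ι) (m : M) (v : Fin k → ι → A) :
    minorForm L m v = (Matrix.of fun i j ↦ v i (L j)).det • m :=
  rfl

theorem minorForm_curryLeft_single [DecidableEq ι] {L : Fin (k + 1) → ι} (hL : L.Injective)
    (m : M) :
    (minorForm L m).curryLeft (Pi.single (L 0) (1 : A)) = minorForm (Fin.tail L) m := by
  ext v
  rw [AlternatingMap.curryLeft_apply_apply, minorForm_apply, Matrix.det_succ_row_zero,
    Fin.sum_univ_succ]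
  simp [minorForm_apply, Pi.single_apply, hL.eq_iff, Fin.succ_ne_zero, Fin.tail, Matrix.submatrix]

theorem dualWedge_proj_minorForm (i : ι) (L : Fin k → ι) (m : M) :
    dualWedge (LinearMap.proj i) (minorForm L m) =
      (minorForm (Fin.cons i L) m : (ι → A) [⋀^Fin (k + 1)]→ₗ[A] M) := by
  ext v
  rw [dualWedge_apply, minorForm_apply, Matrix.det_succ_column_zero]
  simp [minorForm_apply, Matrix.submatrix, Fin.removeNth, Finset.sum_smul, mul_smul]

theorem curryLeft_mem_spanSMulTop [Finite κ] (f : (κ → A) [⋀^Fin (k + 1)]→ₗ[A] M)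
    (u : κ → A) (v : Fin k → κ → A) : f.curryLeft u v ∈ spanSMulTop M u := by
  classical
  have := Fintype.ofFinite κ
  have hu : f.curryLeft u = ∑ i, u i • f.curryLeft (Pi.single i 1) := by
    conv_lhs => rw [pi_eq_sum_univ' u]
    simp only [map_sum, map_smul]
  rw [hu, alternatingMap_sum_apply]
  simpa using Submodule.sum_mem _ fun i _ ↦ smul_mem_spanSMulTop u i (f.curryLeft (Pi.single i 1) v)

variable [Fintype ι] [Fintype κ]

theorem compLinearMap_vecMulLinear_curryLeft [DecidableEq ι]
    (f : (ι → A) [⋀^Fin (k + 1)]→ₗ[A] M) (W : Matrix κ ι A) (u : κ → A) :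
    (f.compLinearMap W.vecMulLinear).curryLeft u =
      ∑ i, (u ᵥ* W) i • (f.curryLeft (Pi.single i 1)).compLinearMap W.vecMulLinear := by
  rw [AlternatingMap.curryLeft_compLinearMap, Matrix.vecMulLinear_apply]
  conv_lhs => rw [pi_eq_sum_univ' (u ᵥ* W)]
  ext v
  simp [alternatingMap_sum_apply, map_sum]

theorem dualWedge_compLinearMap_mulVecLin [DecidableEq κ] (f : (κ → A) [⋀^Fin k]→ₗ[A] M)
    (W : Matrix κ ι A) (u : κ → A) :
    (dualWedge (dotProductEquiv A κ u) f).compLinearMap W.mulVecLin =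
      ∑ i, (u ᵥ* W) i • dualWedge (LinearMap.proj i) (f.compLinearMap W.mulVecLin) := by
  have h : dotProductEquiv A κ u ∘ₗ W.mulVecLin = ∑ i, (u ᵥ* W) i • LinearMap.proj i := by
    refine LinearMap.ext fun v ↦ ?_
    simpa [dotProduct] using Matrix.dotProduct_mulVec u W v
  rw [dualWedge_compLinearMap, h]
  simp [map_sum, LinearMap.sum_apply]

end Minor

section Linkage

variable {ι κ A M : Type*} [CommRing A] [AddCommGroup M] [Module A M] [Fintype κ] {k : ℕ}
  {u : κ → A}

theorem span_range_vecMul_le (u : κ → A) (W : Matrix κ ι A) :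
    Ideal.span (Set.range (u ᵥ* W)) ≤ Ideal.span (Set.range u) := by
  rw [Ideal.span_le]
  rintro _ ⟨i, rfl⟩
  exact Ideal.sum_mem _ fun j _ ↦ Ideal.mul_mem_right _ _ (Ideal.subset_span ⟨j, rfl⟩)

theorem span_det_mul_span_range_le [DecidableEq κ] (u : κ → A) (W : Matrix κ κ A) :
    Ideal.span {W.det} * Ideal.span (Set.range u) ≤ Ideal.span (Set.range (u ᵥ* W)) := by
  have h : (u ᵥ* W) ᵥ* W.adjugate = W.det • u := by
    rw [Matrix.vecMul_vecMul, Matrix.mul_adjugate, Matrix.vecMul_smul, Matrix.vecMul_one]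
  rw [Ideal.span_mul_span', Ideal.span_le]
  rintro _ ⟨_, rfl, _, ⟨j, rfl⟩, rfl⟩
  exact span_range_vecMul_le (u ᵥ* W) W.adjugate (Ideal.subset_span ⟨j, congrFun h j⟩)

theorem IsModuleIndependent.mem_of_minorForm_sub_curryLeft_mem [Fintype ι] {W : Matrix κ ι A}
    (hx : IsModuleIndependent M (u ᵥ* W)) {m : M} {L : Fin k → ι} (hL : L.Injective)
    (g : (κ → A) [⋀^Fin (k + 1)]→ₗ[A] M)
    (hg : ∀ v : Fin k → κ → A,
      minorForm L m (fun i ↦ v i ᵥ* W) - g.curryLeft u v ∈ spanSMulTop M (u ᵥ* W)) :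
    m ∈ spanSMulTop M u := by
  classical
  induction k with
  | zero =>
    have h := Submodule.smul_mono_left (span_range_vecMul_le u W) (hg 0)
    simpa [minorForm_apply] using add_mem h (curryLeft_mem_spanSMulTop g u 0)
  | succ k ih =>
    obtain ⟨g', hg'⟩ := hx.exists_sub_curryLeft_mem hg
      (compLinearMap_vecMulLinear_curryLeft (minorForm L m) W u) (L 0)
    rw [minorForm_curryLeft_single hL] at hg'
    exact ih (hL.comp (Fin.succ_injective k)) g' hg'

theorem IsModuleIndependent.mem_of_det_smul_mem {n : ℕ} {u : Fin n → A}
    {W : Matrix (Fin n) (Fin n) A} (hx : IsModuleIndependent M (u ᵥ* W)) {m : M}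
    (hm : W.det • m ∈ spanSMulTop M (u ᵥ* W)) : m ∈ spanSMulTop M u := by
  refine hx.mem_of_minorForm_sub_curryLeft_mem (m := m) Function.injective_id 0 fun v ↦ ?_
  have h : minorForm id m (fun i ↦ v i ᵥ* W) = (Matrix.of v).det • W.det • m := by
    rw [smul_smul, ← Matrix.det_mul]
    rfl
  simpa [h] using Submodule.smul_mem _ _ hm

theorem IsModuleIndependent.exists_minorForm_sub_mem [Fintype ι] [DecidableEq κ] {W : Matrix κ ι A}
    (hx : IsModuleIndependent M (u ᵥ* W)) {m : M}
    (hm : ∀ j, u j • m ∈ spanSMulTop M (u ᵥ* W)) (L : Fin k → ι) :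
    ∃ f : (κ → A) [⋀^Fin k]→ₗ[A] M,
      (∀ v, dualWedge (dotProductEquiv A κ u) f v ∈ spanSMulTop M (u ᵥ* W)) ∧
      ∀ v : Fin k → ι → A,
        minorForm L m v - f (fun i ↦ W *ᵥ v i) ∈ spanSMulTop M (u ᵥ* W) := by
  classical
  induction k with
  | zero =>
    refine ⟨AlternatingMap.constOfIsEmpty A (κ → A) (Fin 0) m, fun v ↦ ?_, fun v ↦ ?_⟩
    · simp only [dualWedge_apply]
      simpa [dotProduct, Finset.sum_smul, mul_comm (u _), mul_smul] using
        Submodule.sum_mem _ fun j _ ↦ Submodule.smul_mem _ (v 0 j) (hm j)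
    · simp [minorForm_apply]
  | succ k ih =>
    obtain ⟨f, hf, hLf⟩ := ih (Fin.tail L)
    obtain ⟨θ, hfθ, hθ⟩ := hx.exists_dualWedge_eq_sum hf
    refine ⟨θ (L 0), hθ (L 0), fun v ↦ ?_⟩
    have hWf : dualWedge (LinearMap.proj (L 0)) (f.compLinearMap W.mulVecLin) v -
        θ (L 0) (fun i ↦ W *ᵥ v i) ∈ spanSMulTop M (u ᵥ* W) := by
      refine hx.sub_mem (m := fun i ↦ dualWedge (LinearMap.proj i) (f.compLinearMap W.mulVecLin) v)
        (m' := fun i ↦ θ i fun j ↦ W *ᵥ v j) ?_ (L 0)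
      have := congr($(dualWedge_compLinearMap_mulVecLin f W u) v)
      simpa [hfθ, alternatingMap_sum_apply] using this.symm
    have hL : dualWedge (LinearMap.proj (L 0))
        (minorForm (Fin.tail L) m - f.compLinearMap W.mulVecLin) v ∈ spanSMulTop M (u ᵥ* W) :=
      dualWedge_mem _ hLf v
    rw [map_sub, dualWedge_proj_minorForm] at hL
    simpa using add_mem hL hWf

theorem IsModuleIndependent.mem_sup_span_det_smul_top {n : ℕ} {u : Fin n → A}
    {W : Matrix (Fin n) (Fin n) A} (hx : IsModuleIndependent M (u ᵥ* W)) {m : M}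
    (hm : ∀ j, u j • m ∈ spanSMulTop M (u ᵥ* W)) :
    m ∈ (Ideal.span (Set.range (u ᵥ* W)) ⊔ Ideal.span {W.det}) • (⊤ : Submodule A M) := by
  obtain ⟨f, -, hf⟩ := hx.exists_minorForm_sub_mem hm id
  have h := hf fun i ↦ Pi.single i 1
  have hI : (Matrix.of fun i j : Fin n ↦ (Pi.single i 1 : Fin n → A) j) = 1 := by
    ext i j
    simp [Matrix.one_apply, Pi.single_apply, eq_comm]
  simp only [minorForm_apply, id, hI, Matrix.det_one, one_smul] at h
  rw [alternatingMap_mulVec_single] at h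
  rw [Submodule.sup_smul, ← sub_add_cancel m]
  exact Submodule.add_mem_sup h (Submodule.smul_mem_smul (Ideal.mem_span_singleton_self _) trivial)

end Linkage

/-- Linkage for `M`-independent sequences: if `x = uW` with `x` `M`-independent and
`Δ = det W`, then `(JₓM : Jᵤ) = (Jₓ + (Δ))M` and `(JₓM : Jₓ + (Δ)) = JᵤM`. -/
theorem colon_submodules_of_independent
    {A : Type} [CommRing A] {M : Type} [AddCommGroup M] [Module A M]
    {n : ℕ} (x u : Fin n → A) (W : Matrix (Fin n) (Fin n) A)
    (hW : ∀ i, x i = ∑ j, u j * W j i)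
    (hind : ∀ m : Fin n → M, (∑ i, x i • m i) = 0 →
      ∀ i, m i ∈ Ideal.span (Set.range x) • (⊤ : Submodule A M)) :
    ({m : M | ∀ a ∈ Ideal.span (Set.range u), a • m ∈
        Ideal.span (Set.range x) • (⊤ : Submodule A M)} =
      ↑((Ideal.span (Set.range x) ⊔ Ideal.span {W.det}) • (⊤ : Submodule A M))) ∧
    ({m : M | W.det • m ∈ Ideal.span (Set.range x) • (⊤ : Submodule A M) ∧
        ∀ a ∈ Ideal.span (Set.range x), a • m ∈
          Ideal.span (Set.range x) • (⊤ : Submodule A M)} =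
      ↑(Ideal.span (Set.range u) • (⊤ : Submodule A M))) := by
  obtain rfl : x = u ᵥ* W := funext hW
  have hx : IsModuleIndependent M (u ᵥ* W) := hind
  have hΔ := span_det_mul_span_range_le u W
  constructor <;> ext m
  · refine ⟨fun h ↦ hx.mem_sup_span_det_smul_top fun j ↦ h _ (Ideal.subset_span ⟨j, rfl⟩),
      fun h a ha ↦ ?_⟩
    have hJ : Ideal.span (Set.range u) * (Ideal.span (Set.range (u ᵥ* W)) ⊔ Ideal.span {W.det}) ≤
        Ideal.span (Set.range (u ᵥ* W)) := by
      rw [Ideal.mul_sup]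
      exact sup_le Ideal.mul_le_right (mul_comm (Ideal.span {W.det}) _ ▸ hΔ)
    refine Submodule.smul_mono_left hJ ?_
    rw [Submodule.mul_smul]
    exact Submodule.smul_mem_smul ha h
  · refine ⟨fun h ↦ hx.mem_of_det_smul_mem h.1,
      fun h ↦ ⟨Submodule.smul_mono_left hΔ ?_, fun a ha ↦ Submodule.smul_mem_smul ha trivial⟩⟩
    rw [Submodule.mul_smul]
    exact Submodule.smul_mem_smul (Ideal.mem_span_singleton_self _) h
end

section
/- Let A be a Noetherian local ring and M a nonzero finite A-module. If there exists an M-independent sequence x_1,...,x_n in m_A with n = edim(A), then A/(x_1,...,x_n) is a complete intersection of dimension zero and M/I²M is free over A/I², where I = (x_1,...,x_n). -/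
open IsLocalRing

/-- The embedding dimension of a local ring: the minimal number of generators of its
maximal ideal. -/
noncomputable def edim (A : Type) [CommRing A] [IsLocalRing A] : ℕ :=
  sInf {k : ℕ | ∃ y : Fin k → A, Ideal.span (Set.range y) = maximalIdeal A}

/-- A regular local ring: a Noetherian local ring whose embedding dimension equals its
Krull dimension. -/
def IsRegularLocal (R : Type) [CommRing R] [IsLocalRing R] : Prop :=
  IsNoetherianRing R ∧ (edim R : WithBot ℕ∞) = ringKrullDim R

/-- A ring is a complete intersection of dimension zero if it is a quotient of a regular
local ring by an ideal generated by a regular sequence whose length equals the Krull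
dimension of the regular local ring. -/
def IsCompleteIntersectionDimZero (C : Type) [CommRing C] : Prop :=
  ∃ (R : Type) (_ : CommRing R) (_ : IsLocalRing R),
    IsRegularLocal R ∧
    ∃ f : R →+* C, Function.Surjective f ∧
      ∃ (c : ℕ) (y : Fin c → R),
        (c : WithBot ℕ∞) = ringKrullDim R ∧
        RingTheory.Sequence.IsRegular R (List.ofFn y) ∧
        RingHom.ker f = Ideal.span (Set.range y)

/-! Let `u` generate `𝔪` minimally and write `x = U u` with `U` a square matrix. Independence makes
`det U • m` a Koszul boundary of `u` modulo `I M` only when `m` is one, by descending induction on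
the size of the minors of `U`; hence `det U • m ∈ I M` forces `m ∈ 𝔪 M`, and in particular
`det U ∉ I`.

Membership in `I` of `det U` can be tested modulo a power of `𝔪`. The Artinian ring `A ⧸ 𝔪ˢ⁺¹` is
the quotient of a regular local ring `R` of dimension `n`, since it receives a map from a discrete
valuation ring onto its residue field: a power series ring in equal characteristic zero, and a
Cohen ring otherwise. Trading the generators of `𝔪_R` one at a time for lifts of the `xᵢ`, perturbed
by high powers to stay regular, keeps the socle of the quotient simple. A simple socle generated by
`det B`, for `B` the lift of `U`, cannot be killed by a map under which `det B` survives, so the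
Artinian quotient of `R` so obtained is already `A ⧸ I`.

Finally, map a free module `F` onto `M` modulo `𝔪`. Since `det U` generates the socle of `A ⧸ I` and
`det U • m ∈ I M` forces `m ∈ 𝔪 M`, the map `F ⧸ I F → M ⧸ I M` is injective; independence lifts
this to `I²`, and `𝔪` is nilpotent modulo `I²`. -/

/-- An `M`-independent sequence: every relation `∑ xᵢ mᵢ = 0` with coefficients in `M` has all its
coefficients in `(x) M`. -/
def IsIndependentOn {ι A : Type*} [Fintype ι] [CommRing A] (M : Type*) [AddCommGroup M]
    [Module A M] (x : ι → A) : Prop :=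
  ∀ m : ι → M, ∑ i, x i • m i = 0 → ∀ i, m i ∈ Ideal.span (Set.range x) • (⊤ : Submodule A M)

section Determinant

variable {ι A M : Type*} [Fintype ι] [CommRing A] [AddCommGroup M] [Module A M]

lemma mem_span_range_smul_iff_exists_sum (x : ι → A) (N : Submodule A M) (z : M) :
    z ∈ Ideal.span (Set.range x) • N ↔ ∃ m : ι → M, (∀ i, m i ∈ N) ∧ ∑ i, x i • m i = z := by
  classical
  constructor
  · intro hz
    induction hz using Submodule.smul_induction_on' with
    | smul r hr m hm =>
      obtain ⟨c, rfl⟩ := (Ideal.mem_span_range_iff_exists_fun).1 hr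
      exact ⟨fun i => c i • m, fun i => N.smul_mem _ hm, by
        simp only [Finset.sum_smul, smul_smul, mul_comm]⟩
    | add y _ z _ hy hz =>
      obtain ⟨a, ha, rfl⟩ := hy
      obtain ⟨b, hb, rfl⟩ := hz
      exact ⟨a + b, fun i => add_mem (ha i) (hb i), by
        simp only [Pi.add_apply, smul_add, Finset.sum_add_distrib]⟩
  · rintro ⟨m, hm, rfl⟩
    exact sum_mem fun i _ => Submodule.smul_mem_smul (Ideal.subset_span ⟨i, rfl⟩) (hm i)

lemma exists_eq_sum_smul_of_forall_mem_span_range_smul_top {P : Type*} [AddCommGroup P]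
    [Module A P] [Module.Projective A P] (x : ι → A) (f : P →ₗ[A] M)
    (hf : ∀ p, f p ∈ Ideal.span (Set.range x) • (⊤ : Submodule A M)) :
    ∃ g : ι → P →ₗ[A] M, f = ∑ i, x i • g i := by
  let S : (ι → M) →ₗ[A] M := ∑ i, x i • LinearMap.proj i
  have hS (m : ι → M) : S m = ∑ i, x i • m i := by simp [S]
  have hfS (p : P) : f p ∈ LinearMap.range S := by
    obtain ⟨m, -, hm⟩ := (mem_span_range_smul_iff_exists_sum x ⊤ _).1 (hf p)
    exact ⟨m, (hS m).trans hm⟩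
  obtain ⟨h, hh⟩ := Module.projective_lifting_property S.rangeRestrict
    (f.codRestrict _ hfS) S.surjective_rangeRestrict
  refine ⟨fun i => LinearMap.proj i ∘ₗ h, LinearMap.ext fun p => ?_⟩
  have hp : S (h p) = f p := congrArg Subtype.val (LinearMap.congr_fun hh p)
  rw [← hp, hS]
  simp

lemma exists_alternatingMap_eq_sum_smul {P : Type*} [AddCommGroup P] [Module A P] {i : ℕ}
    [Module.Projective A (⋀[A]^i P)] (x : ι → A) (f : P [⋀^Fin i]→ₗ[A] M)
    (hf : ∀ v, f v ∈ Ideal.span (Set.range x) • (⊤ : Submodule A M)) :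
    ∃ g : ι → P [⋀^Fin i]→ₗ[A] M, ∀ v, f v = ∑ k, x k • g k v := by
  have hspan : Submodule.span A (Set.range (exteriorPower.ιMulti A i (M := P))) ≤
      (Ideal.span (Set.range x) • (⊤ : Submodule A M)).comap
        (exteriorPower.alternatingMapLinearEquiv f) := by
    rw [Submodule.span_le]
    rintro _ ⟨v, rfl⟩
    simpa using hf v
  rw [exteriorPower.ιMulti_span] at hspan
  obtain ⟨g, hg⟩ := exists_eq_sum_smul_of_forall_mem_span_range_smul_top x _
    fun z => hspan (Submodule.mem_top (x := z))
  refine ⟨fun k => (g k).compAlternatingMap (exteriorPower.ιMulti A i), fun v => ?_⟩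
  simpa using LinearMap.congr_fun hg (exteriorPower.ιMulti A i v)

/-- The `i × i` minor of the vectors `U v₁, …, U vᵢ` on the rows `ρ`, as an alternating map
in `v`. -/
noncomputable def rowMinor {κ : Type*} (U : Matrix κ ι A) {i : ℕ} (ρ : Fin i → κ) :
    (ι → A) [⋀^Fin i]→ₗ[A] A :=
  Matrix.detRowAlternating.compLinearMap (LinearMap.funLeft A A ρ ∘ₗ U.mulVecLin)

lemma rowMinor_apply {κ : Type*} (U : Matrix κ ι A) {i : ℕ} (ρ : Fin i → κ)
    (v : Fin i → ι → A) :
    rowMinor U ρ v = Matrix.det (Matrix.of fun b a => (U.mulVec (v b)) (ρ a)) :=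
  rfl

lemma rowMinor_vecCons {κ : Type*} (U : Matrix κ ι A) {i : ℕ} (σ : Fin (i + 1) → κ)
    (u : ι → A) (v : Fin i → ι → A) :
    rowMinor U σ (Matrix.vecCons u v) = ∑ a : Fin (i + 1),
      (-1) ^ (a : ℕ) * U.mulVec u (σ a) * rowMinor U (σ ∘ a.succAbove) v := by
  rw [rowMinor_apply, Matrix.det_succ_row_zero]
  rfl

lemma rowMinor_id {n : ℕ} (U : Matrix (Fin n) (Fin n) A) (v : Fin n → Fin n → A) :
    rowMinor U id v = (Matrix.of v).det * U.det := by
  rw [rowMinor_apply, ← Matrix.det_transpose U, ← Matrix.det_mul]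
  congr 1
  ext a b
  simp [Matrix.mul_apply, Matrix.mulVec, dotProduct, mul_comm]

/-- `φ` agrees modulo `N` with the contraction of an alternating map by `u`, that is, with a
boundary of the Koszul complex of `u` with coefficients in `M`. -/
def IsKoszulBoundaryModulo {P : Type*} [AddCommGroup P] [Module A P] {i : ℕ} (u : P)
    (N : Submodule A M) (φ : (Fin i → P) → M) : Prop :=
  ∃ θ : P [⋀^Fin (i + 1)]→ₗ[A] M, ∀ v, φ v - θ (Matrix.vecCons u v) ∈ N

lemma IsIndependentOn.isKoszulBoundaryModulo_tail {κ : Type*} [Fintype κ] {U : Matrix κ ι A}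
    {u : ι → A} (hind : IsIndependentOn M (U.mulVec u)) {m : M} {i : ℕ}
    {σ : Fin (i + 1) → κ} (hσ : Function.Injective σ)
    (h : IsKoszulBoundaryModulo u (Ideal.span (Set.range (U.mulVec u)) • (⊤ : Submodule A M))
      fun v => rowMinor U σ v • m) :
    IsKoszulBoundaryModulo u (Ideal.span (Set.range (U.mulVec u)) • (⊤ : Submodule A M))
      fun v => rowMinor U (σ ∘ Fin.succ) v • m := by
  classical
  obtain ⟨θ, hθ⟩ := h
  obtain ⟨ψ, hψ⟩ := exists_alternatingMap_eq_sum_smul (U.mulVec u)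
    ((LinearMap.toSpanSingleton A M m).compAlternatingMap (rowMinor U σ) - θ.curryLeft u)
    fun v => by simpa using hθ v
  refine ⟨ψ (σ 0), fun v => ?_⟩
  have hexpand : rowMinor U σ (Matrix.vecCons u v) • m =
      ∑ k, U.mulVec u k • ψ k (Matrix.vecCons u v) := by
    have huu : θ (Matrix.vecCons u (Matrix.vecCons u v)) = 0 :=
      θ.map_eq_zero_of_eq _ (i := 0) (j := 1) rfl (by simp)
    simpa [huu] using hψ (Matrix.vecCons u v)
  let c (a : Fin (i + 1)) : M := ((-1) ^ (a : ℕ) * rowMinor U (σ ∘ a.succAbove) v) • m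
  have hrel : ∑ k, U.mulVec u k •
      (ψ k (Matrix.vecCons u v) - ∑ a, if σ a = k then c a else 0) = 0 := by
    simp only [smul_sub, Finset.sum_sub_distrib, ← hexpand, rowMinor_vecCons, Finset.smul_sum,
      Finset.sum_smul]
    rw [Finset.sum_comm, sub_eq_zero]
    refine Finset.sum_congr rfl fun a _ => ?_
    simp only [smul_ite, smul_zero, Finset.sum_ite_eq, Finset.mem_univ, if_true, c, smul_smul]
    congr 1
    ring
  have hcoeff : ∑ a, (if σ a = σ 0 then c a else 0) = rowMinor U (σ ∘ Fin.succ) v • m := by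
    simp [hσ.eq_iff, c]
  have hmem := neg_mem (hind _ hrel (σ 0))
  rwa [neg_sub, hcoeff] at hmem

lemma IsIndependentOn.isKoszulBoundaryModulo_elim0 {κ : Type*} [Fintype κ] {U : Matrix κ ι A}
    {u : ι → A} (hind : IsIndependentOn M (U.mulVec u)) {m : M} {i : ℕ} {σ : Fin i → κ}
    (hσ : Function.Injective σ)
    (h : IsKoszulBoundaryModulo u (Ideal.span (Set.range (U.mulVec u)) • (⊤ : Submodule A M))
      fun v => rowMinor U σ v • m) :
    IsKoszulBoundaryModulo u (Ideal.span (Set.range (U.mulVec u)) • (⊤ : Submodule A M))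
      fun _ : Fin 0 → ι → A => m := by
  induction i with
  | zero => simpa [rowMinor_apply] using h
  | succ i ih =>
    exact ih (hσ.comp (Fin.succ_injective i)) (hind.isKoszulBoundaryModulo_tail hσ h)

lemma linearMap_apply_mem_span_range_smul_top {κ : Type*} [Finite κ] (f : (κ → A) →ₗ[A] M)
    (u : κ → A) : f u ∈ Ideal.span (Set.range u) • (⊤ : Submodule A M) := by
  classical
  have := Fintype.ofFinite κ
  rw [f.pi_apply_eq_sum_univ u]
  exact sum_mem fun j _ =>
    Submodule.smul_mem_smul (Ideal.subset_span (Set.mem_range_self j)) Submodule.mem_top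

lemma span_range_mulVec_le {κ : Type*} (U : Matrix κ ι A) (u : ι → A) :
    Ideal.span (Set.range (U.mulVec u)) ≤ Ideal.span (Set.range u) := by
  rw [Ideal.span_le]
  rintro _ ⟨i, rfl⟩
  exact sum_mem fun j _ => Ideal.mul_mem_left _ _ (Ideal.subset_span (Set.mem_range_self j))

theorem IsIndependentOn.mem_smul_top_of_det_smul_mem {n : ℕ} {U : Matrix (Fin n) (Fin n) A}
    {u : Fin n → A} (hind : IsIndependentOn M (U.mulVec u)) {m : M}
    (hm : U.det • m ∈ Ideal.span (Set.range (U.mulVec u)) • (⊤ : Submodule A M)) :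
    m ∈ Ideal.span (Set.range u) • (⊤ : Submodule A M) := by
  have htop : IsKoszulBoundaryModulo u
      (Ideal.span (Set.range (U.mulVec u)) • (⊤ : Submodule A M))
      fun v => rowMinor U id v • m :=
    ⟨0, fun v => by
      simpa [rowMinor_id, mul_smul] using Submodule.smul_mem _ (Matrix.of v).det hm⟩
  obtain ⟨θ, hθ⟩ := hind.isKoszulBoundaryModulo_elim0 Function.injective_id htop
  have hθu : θ (Matrix.vecCons u ![]) ∈ Ideal.span (Set.range u) • (⊤ : Submodule A M) := by
    rw [Matrix.cons_fin_one]
    exact linearMap_apply_mem_span_range_smul_top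
      ((AlternatingMap.ofSubsingleton A (Fin n → A) M (0 : Fin 1)).symm θ) u
  simpa using add_mem (Submodule.smul_mono_left (span_range_mulVec_le U u) (hθ ![])) hθu

end Determinant

section Exchange

open RingTheory.Sequence

variable {R : Type*} [CommRing R] [IsLocalRing R]

/-- The socle of `R ⧸ J` is at most one-dimensional over the residue field: any nonzero element
of it generates it. -/
def HasSimpleSocle (J : Ideal R) : Prop :=
  ∀ a b, a ∉ J → (∀ r ∈ maximalIdeal R, r * a ∈ J) → (∀ r ∈ maximalIdeal R, r * b ∈ J) →
    ∃ c, b - c * a ∈ J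

lemma hasSimpleSocle_maximalIdeal : HasSimpleSocle (maximalIdeal R) := by
  intro a b ha _ _
  obtain ⟨c, hc⟩ := (notMem_maximalIdeal.1 ha).exists_left_inv
  exact ⟨b * c, by simp [mul_assoc, hc]⟩

lemma mem_sup_span_singleton_iff {S : Type*} [CommRing S] {K : Ideal S} {w z : S} :
    z ∈ K ⊔ Ideal.span {w} ↔ ∃ d, z - d * w ∈ K := by
  rw [sup_comm, Ideal.mem_span_singleton_sup]
  constructor
  · rintro ⟨d, k, hk, rfl⟩
    exact ⟨d, by simpa using hk⟩
  · rintro ⟨d, hd⟩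
    exact ⟨d, _, hd, by ring⟩

-- Multiplication by `w` followed by division by `y` maps the socle of `R ⧸ (K + (y))` to that of
-- `R ⧸ (K + (w))`, injectively.
lemma HasSimpleSocle.sup_span_singleton {K : Ideal R} {w y : R} (hw : IsSMulRegular (R ⧸ K) w)
    (hy : IsSMulRegular (R ⧸ K) y) (hwm : w ∈ maximalIdeal R)
    (hS : HasSimpleSocle (K ⊔ Ideal.span {w})) : HasSimpleSocle (K ⊔ Ideal.span {y}) := by
  rw [isSMulRegular_quotient_iff_mem_of_smul_mem] at hw hy
  intro a b ha hsa hsb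
  have transfer (a : R) (hsa : ∀ r ∈ maximalIdeal R, r * a ∈ K ⊔ Ideal.span {y}) :
      ∃ a', w * a - a' * y ∈ K ∧ ∀ r ∈ maximalIdeal R, r * a' ∈ K ⊔ Ideal.span {w} := by
    obtain ⟨a', ha'⟩ := mem_sup_span_singleton_iff.1 (hsa w hwm)
    refine ⟨a', ha', fun r hr => ?_⟩
    obtain ⟨e, he⟩ := mem_sup_span_singleton_iff.1 (hsa r hr)
    refine mem_sup_span_singleton_iff.2 ⟨e, hy _ ?_⟩
    convert sub_mem (K.mul_mem_left w he) (K.mul_mem_left r ha') using 1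
    simp only [smul_eq_mul]
    ring
  obtain ⟨a', ha', hsa'⟩ := transfer a hsa
  obtain ⟨b', hb', hsb'⟩ := transfer b hsb
  have hna : a' ∉ K ⊔ Ideal.span {w} := by
    intro h
    obtain ⟨d, hd⟩ := mem_sup_span_singleton_iff.1 h
    refine ha (mem_sup_span_singleton_iff.2 ⟨d, hw _ ?_⟩)
    convert add_mem ha' (K.mul_mem_left y hd) using 1
    simp only [smul_eq_mul]
    ring
  obtain ⟨c, hc⟩ := hS a' b' hna hsa' hsb'
  obtain ⟨d, hd⟩ := mem_sup_span_singleton_iff.1 hc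
  refine ⟨c, mem_sup_span_singleton_iff.2 ⟨d, hw _ ?_⟩⟩
  convert add_mem (sub_mem hb' (K.mul_mem_left c ha')) (K.mul_mem_left y hd) using 1
  simp only [smul_eq_mul]
  ring

lemma mem_of_add_pow_mem_of_add_pow_mem {P : Ideal R} [P.IsPrime] {w x : R}
    (hwm : w ∈ maximalIdeal R) {a b : ℕ} (hab : a < b) (ha : x + w ^ a ∈ P)
    (hb : x + w ^ b ∈ P) : w ∈ P := by
  have hunit : IsUnit (1 - w ^ (b - a)) := isUnit_one_sub_self_of_mem_nonunits _ <|
    (mem_maximalIdeal _).1 <| Ideal.pow_mem_of_mem _ hwm _ (Nat.sub_pos_of_lt hab)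
  have hmul : (1 - w ^ (b - a)) * w ^ a ∈ P := by
    convert sub_mem ha hb using 1
    rw [sub_mul, ← pow_add, Nat.sub_add_cancel hab.le]
    ring
  exact ‹P.IsPrime›.mem_of_pow_mem _ ((P.unit_mul_mem_iff_mem hunit).1 hmul)

lemma exists_isSMulRegular_add_pow [IsNoetherianRing R] {N : Type*} [AddCommGroup N] [Module R N]
    [Module.Finite R N] {w : R} (hw : IsSMulRegular N w) (hwm : w ∈ maximalIdeal R) (x : R)
    (s : ℕ) : ∃ a > s, IsSMulRegular N (x + w ^ a) := by
  have mem_biUnion {r : R} : (∃ P ∈ associatedPrimes R N, r ∈ P) ↔ ¬ IsSMulRegular N r := by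
    simpa using Set.ext_iff.1 (biUnion_associatedPrimes_eq_compl_regular R N) r
  by_contra! hcon
  have hP (a : Set.Ioi s) : ∃ P ∈ associatedPrimes R N, x + w ^ (a : ℕ) ∈ P :=
    mem_biUnion.2 (hcon a a.2)
  choose P hP hxP using hP
  have : Finite (associatedPrimes R N) := associatedPrimes.finite R N
  have : Infinite (Set.Ioi s) := (Set.Ioi_infinite s).to_subtype
  obtain ⟨a, b, hab, hPab⟩ := Finite.exists_ne_map_eq_of_infinite
    fun a => (⟨P a, hP a⟩ : associatedPrimes R N)
  have hPab' : P a = P b := congrArg Subtype.val hPab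
  have : (P a).IsPrime := (hP a).isPrime
  have hwP : w ∈ P a := by
    rcases lt_or_gt_of_ne (Subtype.coe_ne_coe.2 hab) with h | h
    · exact mem_of_add_pow_mem_of_add_pow_mem hwm h (hxP a) (hPab' ▸ hxP b)
    · exact mem_of_add_pow_mem_of_add_pow_mem hwm h (hPab' ▸ hxP b) (hxP a)
  exact mem_biUnion.1 ⟨P a, hP a, hwP⟩ hw

lemma mem_maximalIdeal_of_isRegular {L : List R} (hL : IsRegular R L) {r : R} (hr : r ∈ L) :
    r ∈ maximalIdeal R := by
  have hne : Ideal.ofList L ≠ ⊤ := fun h => hL.top_ne_smul (by simp [h])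
  exact le_maximalIdeal hne (Ideal.subset_span hr)

lemma isRegular_append_singleton_iff {L : List R} {w : R} :
    IsRegular R (L ++ [w]) ↔
      IsRegular R L ∧ w ∈ maximalIdeal R ∧ IsSMulRegular (R ⧸ Ideal.ofList L) w := by
  have weakly_iff : IsWeaklyRegular R (L ++ [w]) ↔
      IsWeaklyRegular R L ∧ IsSMulRegular (R ⧸ Ideal.ofList L) w := by
    rw [isWeaklyRegular_append_iff, isWeaklyRegular_singleton_iff,
      (show (Ideal.ofList L • ⊤ : Ideal R) = Ideal.ofList L by simp)]
  constructor
  · intro h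
    obtain ⟨hL, hw⟩ := weakly_iff.1 h.toIsWeaklyRegular
    have hmem {r : R} (hr : r ∈ L ++ [w]) := mem_maximalIdeal_of_isRegular h hr
    exact ⟨(isRegular_iff_isWeaklyRegular_of_subset_maximalIdeal
      fun r hr => hmem (List.mem_append_left _ hr)).2 hL, hmem (by simp), hw⟩
  · rintro ⟨hL, hwm, hw⟩
    refine (isRegular_iff_isWeaklyRegular_of_subset_maximalIdeal fun r hr => ?_).2
      (weakly_iff.2 ⟨hL.toIsWeaklyRegular, hw⟩)
    rcases List.mem_append.1 hr with hr | hr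
    · exact mem_maximalIdeal_of_isRegular hL hr
    · exact List.mem_singleton.1 hr ▸ hwm

lemma ofList_eq_of_perm {S : Type*} [CommRing S] {L L' : List S} (h : L.Perm L') :
    Ideal.ofList L = Ideal.ofList L' :=
  congrArg Ideal.span (Set.ext fun _ => h.mem_iff)

lemma ofList_ofFn {S : Type*} [CommRing S] {n : ℕ} (v : Fin n → S) :
    Ideal.ofList (List.ofFn v) = Ideal.span (Set.range v) :=
  congrArg Ideal.span (Set.ext fun _ => List.mem_ofFn)

lemma ofFn_perm_map_erase {α : Type*} {n : ℕ} (z : Fin n → α) (j : Fin n) :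
    (List.ofFn z).Perm ((Finset.univ.erase j).toList.map z ++ [z j]) := by
  rw [List.ofFn_eq_map, ← List.map_singleton, ← List.map_append]
  refine List.Perm.map z (List.Perm.trans ?_ (List.perm_append_singleton _ _).symm)
  refine List.Perm.trans ?_ (Finset.toList_cons (Finset.notMem_erase j Finset.univ))
  rw [Finset.cons_eq_insert, Finset.insert_erase (Finset.mem_univ j)]
  exact List.perm_of_nodup_nodup_toFinset_eq (List.nodup_finRange n) (Finset.nodup_toList _)
    (by simp)

lemma ofFn_update_perm_map_erase {α : Type*} {n : ℕ} (z : Fin n → α) (j : Fin n) (y : α) :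
    (List.ofFn (Function.update z j y)).Perm
      ((Finset.univ.erase j).toList.map z ++ [y]) := by
  have hmap : (Finset.univ.erase j).toList.map (Function.update z j y) =
      (Finset.univ.erase j).toList.map z :=
    List.map_congr_left fun i hi => Function.update_of_ne (by simpa using hi) _ _
  simpa [hmap] using ofFn_perm_map_erase (Function.update z j y) j

variable [IsNoetherianRing R] {n : ℕ}

lemma exists_isRegular_hasSimpleSocle_append_add_pow {L : List R} {w x : R}
    (hreg : IsRegular R (L ++ [w])) (hsoc : HasSimpleSocle (Ideal.ofList (L ++ [w])))
    (hx : x ∈ maximalIdeal R) (s : ℕ) :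
    ∃ a > s, IsRegular R (L ++ [x + w ^ a]) ∧
      HasSimpleSocle (Ideal.ofList (L ++ [x + w ^ a])) := by
  obtain ⟨hL, hwm, hw⟩ := isRegular_append_singleton_iff.1 hreg
  obtain ⟨a, ha, hxw⟩ := exists_isSMulRegular_add_pow hw hwm x s
  have hpow : w ^ a ∈ maximalIdeal R := Ideal.pow_mem_of_mem _ hwm a (Nat.zero_lt_of_lt ha)
  refine ⟨a, ha, isRegular_append_singleton_iff.2 ⟨hL, add_mem hx hpow, hxw⟩, ?_⟩
  rw [Ideal.ofList_append, Ideal.ofList_singleton] at hsoc ⊢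
  exact hsoc.sup_span_singleton hw hxw hwm

lemma exists_isRegular_hasSimpleSocle_update_add_pow {z : Fin n → R}
    (hreg : IsRegular R (List.ofFn z)) (hsoc : HasSimpleSocle (Ideal.span (Set.range z)))
    (j : Fin n) {x : R} (hx : x ∈ maximalIdeal R) (s : ℕ) :
    ∃ a > s, IsRegular R (List.ofFn (Function.update z j (x + z j ^ a))) ∧
      HasSimpleSocle (Ideal.span (Set.range (Function.update z j (x + z j ^ a)))) := by
  simp only [← ofList_ofFn] at hsoc ⊢
  have hperm := ofFn_perm_map_erase z j
  rw [ofList_eq_of_perm hperm] at hsoc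
  obtain ⟨a, ha, hreg', hsoc'⟩ := exists_isRegular_hasSimpleSocle_append_add_pow
    (isRegular_of_perm hreg hperm) hsoc hx s
  have hperm' := ofFn_update_perm_map_erase z j (x + z j ^ a)
  exact ⟨a, ha, isRegular_of_perm hreg' hperm'.symm, (ofList_eq_of_perm hperm') ▸ hsoc'⟩

lemma exists_isRegular_hasSimpleSocle_add_pow {w : Fin n → R}
    (hw : Ideal.span (Set.range w) = maximalIdeal R) (hreg : IsRegular R (List.ofFn w))
    {x : Fin n → R} (hx : ∀ i, x i ∈ maximalIdeal R) (s : ℕ) :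
    ∃ a : Fin n → ℕ, (∀ i, s < a i) ∧ IsRegular R (List.ofFn fun i => x i + w i ^ a i) ∧
      HasSimpleSocle (Ideal.span (Set.range fun i => x i + w i ^ a i)) := by
  classical
  suffices h : ∀ T : Finset (Fin n), ∃ a : Fin n → ℕ, (∀ i, s < a i) ∧
      IsRegular R (List.ofFn (T.piecewise (fun i => x i + w i ^ a i) w)) ∧
      HasSimpleSocle (Ideal.span (Set.range (T.piecewise (fun i => x i + w i ^ a i) w))) by
    simpa using h Finset.univ
  intro T
  induction T using Finset.induction with
  | empty => exact ⟨fun _ => s + 1, by simp, by simpa using hreg, by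
      simpa [hw] using hasSimpleSocle_maximalIdeal⟩
  | insert j T hj ih =>
    obtain ⟨a, ha, hregT, hsocT⟩ := ih
    obtain ⟨b, hb, hregj, hsocj⟩ :=
      exists_isRegular_hasSimpleSocle_update_add_pow hregT hsocT j (hx j) s
    have hupdate : Function.update (T.piecewise (fun i => x i + w i ^ a i) w) j
          (x j + T.piecewise (fun i => x i + w i ^ a i) w j ^ b) =
        (insert j T).piecewise (fun i => x i + w i ^ Function.update a j b i) w := by
      funext i
      by_cases hi : i = j
      · subst hi; simp [hj]
      · by_cases hiT : i ∈ T <;> simp [hi, hiT]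
    rw [hupdate] at hregj hsocj
    exact ⟨Function.update a j b, (Function.forall_update_iff a fun _ c => s < c).2
      ⟨hb, fun i _ => ha i⟩, hregj, hsocj⟩

lemma exists_isRegular_hasSimpleSocle_mulVec {w : Fin n → R}
    (hw : Ideal.span (Set.range w) = maximalIdeal R) (hreg : IsRegular R (List.ofFn w))
    (B : Matrix (Fin n) (Fin n) R) (s : ℕ) :
    ∃ B' : Matrix (Fin n) (Fin n) R, (∀ i j, B' i j - B i j ∈ maximalIdeal R ^ s) ∧
      IsRegular R (List.ofFn (B'.mulVec w)) ∧
      HasSimpleSocle (Ideal.span (Set.range (B'.mulVec w))) := by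
  classical
  have hwm (i) : w i ∈ maximalIdeal R := hw ▸ Ideal.subset_span ⟨i, rfl⟩
  have hx (i) : B.mulVec w i ∈ maximalIdeal R :=
    hw ▸ span_range_mulVec_le B w (Ideal.subset_span ⟨i, rfl⟩)
  obtain ⟨a, ha, hreg', hsoc⟩ := exists_isRegular_hasSimpleSocle_add_pow hw hreg hx s
  have hmul : (B + Matrix.diagonal fun i => w i ^ (a i - 1)).mulVec w =
      fun i => B.mulVec w i + w i ^ a i := by
    funext i
    rw [Matrix.add_mulVec, Pi.add_apply, Matrix.mulVec_diagonal,
      pow_sub_one_mul (Nat.ne_zero_of_lt (ha i))]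
  refine ⟨B + Matrix.diagonal fun i => w i ^ (a i - 1), fun i j => ?_, hmul ▸ hreg', hmul ▸ hsoc⟩
  rw [Matrix.add_apply, add_sub_cancel_left, Matrix.diagonal_apply]
  split_ifs
  · exact Ideal.pow_le_pow_right (Nat.le_sub_one_of_lt (ha i)) (Ideal.pow_mem_pow (hwm i) _)
  · exact zero_mem _

end Exchange

section SquareZeroSection

variable {E V k : Type*} [CommRing E] [CommRing V] [Field k] {p : ℕ} {ρ : V →+* k} {τ : E →+* V}

/-- `ρ` identifies `k` with `V ⧸ pV`, and `p` is a nonzerodivisor of `V`. This is the part of the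
definition of a Cohen ring that the lifting argument depends on. -/
structure IsFlatReduction (p : ℕ) (ρ : V →+* k) : Prop where
  surjective : Function.Surjective ρ
  ker_eq : RingHom.ker ρ = Ideal.span {(p : V)}
  mem_nonZeroDivisors : (p : V) ∈ nonZeroDivisors V

lemma IsFlatReduction.natCast_eq_zero (hρ : IsFlatReduction p ρ) : (p : k) = 0 := by
  have hp : (p : V) ∈ RingHom.ker ρ := hρ.ker_eq ▸ Ideal.mem_span_singleton_self _
  simpa using hp

lemma IsFlatReduction.exists_eq_natCast_mul (hρ : IsFlatReduction p ρ) {v : V} (hv : ρ v = 0) :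
    ∃ w, v = p * w :=
  Ideal.mem_span_singleton.1 (hρ.ker_eq ▸ (RingHom.mem_ker).2 hv)

/-- A subring of `E` which `τ` maps injectively to `V`, a candidate for the image of a section
of `τ` over part of `V`. Containing `pE` and all `p`-th powers makes the residues of its elements
a field over which `k` is purely inseparable of exponent one. -/
structure IsPartialSection (p : ℕ) (τ : E →+* V) (S : Subring E) : Prop where
  natCast_mul_mem : ∀ e : E, p * e ∈ S
  pow_mem : ∀ e : E, e ^ p ∈ S
  eq_zero : ∀ e ∈ S, τ e = 0 → e = 0

/-- The subring `pE + Eᵖ`. -/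
def mulAddPowSubring (E : Type*) [CommRing E] (p : ℕ) [Fact p.Prime] : Subring E where
  carrier := {z | ∃ e a : E, z = p * e + a ^ p}
  mul_mem' := by
    rintro _ _ ⟨e, a, rfl⟩ ⟨e', a', rfl⟩
    exact ⟨p * e * e' + e * a' ^ p + e' * a ^ p, a * a', by ring⟩
  one_mem' := ⟨0, 1, by simp⟩
  add_mem' := by
    rintro _ _ ⟨e, a, rfl⟩ ⟨e', a', rfl⟩
    obtain ⟨r, hr⟩ := exists_add_pow_prime_eq (Fact.out : p.Prime) a a'
    exact ⟨e + e' - a * a' * r, a + a', by rw [hr]; ring⟩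
  zero_mem' := ⟨0, 0, by simp [(Fact.out : p.Prime).ne_zero]⟩
  neg_mem' := by
    rintro _ ⟨e, a, rfl⟩
    obtain ⟨r, hr⟩ := exists_add_pow_prime_eq (Fact.out : p.Prime) a (-a)
    have hzero : (a + -a) ^ p = 0 := by simp [(Fact.out : p.Prime).ne_zero]
    exact ⟨-e - a * a * r, -a, by linear_combination hr - hzero⟩

lemma natCast_mul_eq_zero_of_map_eq_zero (hp : (p : V) ∈ nonZeroDivisors V)
    (hpk : ∀ a ∈ RingHom.ker τ, (p : E) * a = 0) {e : E} (he : τ (p * e) = 0) :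
    (p : E) * e = 0 := by
  refine hpk e ((RingHom.mem_ker).2 ((mul_left_mem_nonZeroDivisors_eq_zero_iff hp).1 ?_))
  simpa using he

lemma isPartialSection_mulAddPowSubring [Fact p.Prime] (hρ : IsFlatReduction p ρ)
    (hτ : Function.Surjective τ) (hsq : RingHom.ker τ ^ 2 = ⊥)
    (hpk : ∀ a ∈ RingHom.ker τ, (p : E) * a = 0) :
    IsPartialSection p τ (mulAddPowSubring E p) := by
  have hp : p.Prime := Fact.out
  refine ⟨fun e => ⟨e, 0, by simp [hp.ne_zero]⟩, fun e => ⟨0, e, by simp⟩, ?_⟩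
  rintro _ ⟨e, a, rfl⟩ hea
  have hτa : ρ (τ a) = 0 := by
    have := congrArg ρ hea
    simpa [hρ.natCast_eq_zero, hp.ne_zero] using this
  obtain ⟨w, hw⟩ := hρ.exists_eq_natCast_mul hτa
  obtain ⟨b, rfl⟩ := hτ w
  have hker : a - p * b ∈ RingHom.ker τ := by simp [hw]
  have ha_sq : a ^ 2 = p * (p * b ^ 2) := by
    have hsq0 : (a - p * b) ^ 2 = 0 := by
      simpa [hsq] using Ideal.pow_mem_pow hker 2
    linear_combination hsq0 + 2 * b * hpk _ hker
  have ha_pow : a ^ p = p * (p * b ^ 2 * a ^ (p - 2)) := by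
    rw [← pow_mul_pow_sub a hp.two_le, ha_sq]
    ring
  rw [ha_pow, ← mul_add] at hea ⊢
  exact natCast_mul_eq_zero_of_map_eq_zero hρ.mem_nonZeroDivisors hpk hea

namespace IsPartialSection

variable {S : Subring E}

lemma exists_eq_natCast_mul (hS : IsPartialSection p τ S) (hρ : IsFlatReduction p ρ)
    (hτ : Function.Surjective τ) {s : E} (hs : s ∈ S) (hs0 : ρ (τ s) = 0) :
    ∃ e : E, s = p * e := by
  obtain ⟨w, hw⟩ := hρ.exists_eq_natCast_mul hs0
  obtain ⟨e, rfl⟩ := hτ w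
  exact ⟨e, sub_eq_zero.1 (hS.eq_zero _ (sub_mem hs (hS.natCast_mul_mem e)) (by simp [hw]))⟩

lemma aeval_eq_zero (hS : IsPartialSection p τ S) (hρ : IsFlatReduction p ρ)
    (hτ : Function.Surjective τ) (hpk : ∀ a ∈ RingHom.ker τ, (p : E) * a = 0) {g : Polynomial S}
    (hg : ∀ i, ρ (τ (g.coeff i)) = 0) {t : E} (ht : τ (Polynomial.aeval t g) = 0) :
    Polynomial.aeval t g = 0 := by
  choose e he using fun i => hS.exists_eq_natCast_mul hρ hτ (g.coeff i).2 (hg i)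
  have hsum : Polynomial.aeval t g = p * ∑ i ∈ g.support, e i * t ^ i := by
    rw [Polynomial.aeval_def, Polynomial.eval₂_eq_sum, Polynomial.sum, Finset.mul_sum]
    refine Finset.sum_congr rfl fun i _ => ?_
    rw [← mul_assoc, ← he]
    rfl
  rw [hsum] at ht ⊢
  exact natCast_mul_eq_zero_of_map_eq_zero hρ.mem_nonZeroDivisors hpk ht

end IsPartialSection

lemma eq_zero_of_aeval_eq_zero_of_pow_mem {F : Type*} [Field F] [Algebra F k] (hp : p.Prime)
    [CharP k p] {t : k} (ht : t ∉ (algebraMap F k).range) (htp : t ^ p ∈ (algebraMap F k).range)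
    {g : Polynomial F} (hdeg : g.degree < p) (hg : Polynomial.aeval t g = 0) : g = 0 := by
  have : Fact p.Prime := ⟨hp⟩
  obtain ⟨c, hc⟩ := htp
  have hirr : Irreducible (Polynomial.X ^ p - Polynomial.C c) := by
    refine X_pow_sub_C_irreducible_of_prime hp fun b hb => ht ⟨b, frobenius_inj k p ?_⟩
    rw [frobenius_def, frobenius_def, ← map_pow, hb, hc]
  have hmin : Polynomial.X ^ p - Polynomial.C c = minpoly F t :=
    minpoly.eq_of_irreducible_of_monic hirr (by simp [hc])
      (Polynomial.monic_X_pow_sub_C c hp.ne_zero)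
  refine Polynomial.eq_zero_of_dvd_of_degree_lt (hmin ▸ minpoly.dvd F t hg) ?_
  rwa [Polynomial.degree_X_pow_sub_C hp.pos]

lemma inv_mem_of_forall_pow_mem (hp : p ≠ 0) {R : Subring k} (hR : ∀ a : k, a ^ p ∈ R) {a : k}
    (ha : a ∈ R) : a⁻¹ ∈ R := by
  rcases eq_or_ne a 0 with rfl | ha0
  · simp
  · have hinv : a⁻¹ = a ^ (p - 1) * a⁻¹ ^ p := by
      rw [← pow_sub_one_mul hp a⁻¹, ← mul_assoc, ← mul_pow, mul_inv_cancel₀ ha0, one_pow, one_mul]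
    exact hinv ▸ mul_mem (pow_mem ha _) (hR _)

lemma map_coeff_eq_zero_of_eval₂_eq_zero (hp : p.Prime) [CharP k p] {S : Type*} [CommRing S]
    (q : S →+* k) (hq : ∀ a : k, a ^ p ∈ q.range) {t : k} (ht : t ∉ q.range)
    {g : Polynomial S} (hdeg : g.degree < p) (hg : g.eval₂ q t = 0) (i : ℕ) :
    q (g.coeff i) = 0 := by
  let F : Subfield k :=
    { q.range with inv_mem' := fun _ => inv_mem_of_forall_pow_mem hp.ne_zero hq }
  let qF : S →+* F := q.codRestrict F fun s => ⟨s, rfl⟩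
  have hrange : (algebraMap F k).range = q.range := by
    ext a
    exact ⟨fun ⟨b, hb⟩ => hb ▸ b.2, fun ha => ⟨⟨a, ha⟩, rfl⟩⟩
  have hgF : g.map qF = 0 := by
    refine eq_zero_of_aeval_eq_zero_of_pow_mem (t := t) hp (hrange ▸ ht) (hrange ▸ hq t)
      (Polynomial.degree_map_le.trans_lt hdeg) ?_
    rw [Polynomial.aeval_def, Polynomial.eval₂_map]
    exact hg
  have hcoeff : qF (g.coeff i) = 0 := by rw [← Polynomial.coeff_map, hgF, Polynomial.coeff_zero]
  exact congrArg Subtype.val hcoeff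

lemma exists_degree_lt_aeval_eq_of_mem_adjoin_singleton {S B : Type*} [CommRing S]
    [CommRing B] [Algebra S B] [Nontrivial S] {t : B} {f : Polynomial S} (hf : f.Monic)
    (ht : Polynomial.aeval t f = 0) {z : B} (hz : z ∈ Algebra.adjoin S {t}) :
    ∃ g : Polynomial S, g.degree < f.degree ∧ Polynomial.aeval t g = z := by
  rw [Algebra.adjoin_singleton_eq_range_aeval] at hz
  obtain ⟨g, rfl⟩ := hz
  exact ⟨g %ₘ f, Polynomial.degree_modByMonic_lt g hf,
    Polynomial.aeval_modByMonic_eq_self_of_root ht⟩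

lemma le_adjoin_singleton_toSubring (S : Subring E) (t : E) :
    S ≤ (Algebra.adjoin S {t}).toSubring := fun s hs =>
  (Algebra.adjoin S {t}).algebraMap_mem ⟨s, hs⟩

lemma mem_adjoin_singleton_toSubring (S : Subring E) (t : E) :
    t ∈ (Algebra.adjoin S {t}).toSubring :=
  Algebra.self_mem_adjoin_singleton S t

namespace IsPartialSection

variable {S : Subring E}

lemma adjoin [Fact p.Prime] (hS : IsPartialSection p τ S) (hρ : IsFlatReduction p ρ)
    (hτ : Function.Surjective τ) (hpk : ∀ a ∈ RingHom.ker τ, (p : E) * a = 0) {t : E}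
    (ht : ∀ s ∈ S, ρ (τ s) ≠ ρ (τ t)) :
    IsPartialSection p τ (Algebra.adjoin S {t}).toSubring := by
  have hp : p.Prime := Fact.out
  have : CharP k p := (CharP.charP_iff_prime_eq_zero hp).2 hρ.natCast_eq_zero
  have : Nontrivial E := (ρ.comp τ).domain_nontrivial
  let q : S →+* k := (ρ.comp τ).comp S.subtype
  have hq (a : k) : a ^ p ∈ q.range := by
    obtain ⟨e, rfl⟩ := hρ.surjective.comp hτ a
    exact ⟨⟨e ^ p, hS.pow_mem e⟩, map_pow (ρ.comp τ) e p⟩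
  refine ⟨fun e => le_adjoin_singleton_toSubring S t (hS.natCast_mul_mem e),
    fun e => le_adjoin_singleton_toSubring S t (hS.pow_mem e), fun z hz hz0 => ?_⟩
  let f : Polynomial S := Polynomial.X ^ p - Polynomial.C ⟨t ^ p, hS.pow_mem t⟩
  obtain ⟨g, hdeg, rfl⟩ := exists_degree_lt_aeval_eq_of_mem_adjoin_singleton
    (Polynomial.monic_X_pow_sub_C _ hp.ne_zero : f.Monic)
    (by simp [Subring.smul_def, Algebra.algebraMap_eq_smul_one]) hz
  refine hS.aeval_eq_zero hρ hτ hpk (map_coeff_eq_zero_of_eval₂_eq_zero hp q hq (t := ρ (τ t))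
    (fun ⟨s, hs⟩ => ht s s.2 hs) ?_ ?_) hz0
  · rwa [Polynomial.degree_X_pow_sub_C hp.pos] at hdeg
  · have := congrArg ρ hz0
    rwa [map_zero, Polynomial.aeval_def, ← RingHom.comp_apply, Polynomial.hom_eval₂] at this

lemma exists_maximal [Fact p.Prime] (hρ : IsFlatReduction p ρ)
    (hτ : Function.Surjective τ) (hsq : RingHom.ker τ ^ 2 = ⊥)
    (hpk : ∀ a ∈ RingHom.ker τ, (p : E) * a = 0) :
    ∃ S : Subring E, Maximal (IsPartialSection p τ) S := by
  have hbound : ∀ c ⊆ {S | IsPartialSection p τ S}, IsChain (· ≤ ·) c → ∀ S ∈ c,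
      ∃ T ∈ {S | IsPartialSection p τ S}, ∀ U ∈ c, U ≤ T := by
    refine fun c hc hchain S hS => ⟨sSup c, ⟨fun e => le_sSup hS ((hc hS).natCast_mul_mem e),
      fun e => le_sSup hS ((hc hS).pow_mem e), fun e he he0 => ?_⟩, fun _ => le_sSup⟩
    obtain ⟨T, hT, heT⟩ := (Subring.mem_sSup_of_directedOn ⟨S, hS⟩ hchain.directedOn).1 he
    exact (hc hT).eq_zero e heT he0
  obtain ⟨S, -, hS⟩ := zorn_le_nonempty₀ _ hbound _
    (isPartialSection_mulAddPowSubring hρ hτ hsq hpk)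
  exact ⟨S, hS⟩

end IsPartialSection

theorem exists_section_of_sq_ker_eq_bot [Fact p.Prime] (hρ : IsFlatReduction p ρ)
    (hτ : Function.Surjective τ) (hsq : RingHom.ker τ ^ 2 = ⊥)
    (hpk : ∀ a ∈ RingHom.ker τ, (p : E) * a = 0) :
    ∃ σ : V →+* E, τ.comp σ = RingHom.id V := by
  obtain ⟨S, hS, hmax⟩ := IsPartialSection.exists_maximal hρ hτ hsq hpk
  have hresidue (t : E) : ∃ s ∈ S, ρ (τ s) = ρ (τ t) := by
    by_contra! hcon
    exact hcon t (hmax (hS.adjoin hρ hτ hpk hcon) (le_adjoin_singleton_toSubring S t)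
      (mem_adjoin_singleton_toSubring S t)) rfl
  have hbij : Function.Bijective (τ.comp S.subtype) := by
    refine ⟨(injective_iff_map_eq_zero _).2 fun s hs => Subtype.ext (hS.eq_zero s s.2 hs),
      fun v => ?_⟩
    obtain ⟨t, rfl⟩ := hτ v
    obtain ⟨s, hs, hst⟩ := hresidue t
    obtain ⟨w, hw⟩ := hρ.exists_eq_natCast_mul (v := τ t - τ s) (by simp [hst])
    obtain ⟨e, rfl⟩ := hτ w
    exact ⟨⟨s + p * e, add_mem hs (hS.natCast_mul_mem e)⟩, by simp [← hw]⟩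
  exact ⟨S.subtype.comp (RingEquiv.ofBijective _ hbij).symm.toRingHom,
    RingHom.ext (RingEquiv.ofBijective _ hbij).apply_symm_apply⟩

end SquareZeroSection

section Lifting

variable {V C D k : Type*} [CommRing V] [CommRing C] [CommRing D] [Field k] {p : ℕ}
  [Fact p.Prime] {ρ : V →+* k}

lemma exists_lift_of_sq_ker_eq_bot (hρ : IsFlatReduction p ρ) {π : C →+* D}
    (hπ : Function.Surjective π) (hsq : RingHom.ker π ^ 2 = ⊥)
    (hpk : ∀ a ∈ RingHom.ker π, (p : C) * a = 0) (f : V →+* D) :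
    ∃ g : V →+* C, π.comp g = f := by
  let E : Subring (V × C) := (f.comp (RingHom.fst V C)).eqLocus (π.comp (RingHom.snd V C))
  let τ : E →+* V := (RingHom.fst V C).comp E.subtype
  have hE (e : E) : f e.1.1 = π e.1.2 := e.2
  have hsnd {e : E} (he : e ∈ RingHom.ker τ) : e.1.2 ∈ RingHom.ker π := by
    have he' : e.1.1 = 0 := he
    rw [RingHom.mem_ker, ← hE, he', map_zero]
  have hτ : Function.Surjective τ := fun v => by
    obtain ⟨c, hc⟩ := hπ (f v)
    exact ⟨⟨(v, c), hc.symm⟩, rfl⟩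
  have hτsq : RingHom.ker τ ^ 2 = ⊥ := by
    rw [eq_bot_iff, pow_two, Ideal.mul_le]
    intro a ha b hb
    have hab : a.1.2 * b.1.2 ∈ RingHom.ker π ^ 2 := pow_two (RingHom.ker π) ▸
      Ideal.mul_mem_mul (hsnd ha) (hsnd hb)
    exact Subtype.ext (Prod.ext (by simp [show a.1.1 = 0 from ha]) (by simpa [hsq] using hab))
  have hτpk (a : E) (ha : a ∈ RingHom.ker τ) : (p : E) * a = 0 :=
    Subtype.ext (Prod.ext (by simp [show a.1.1 = 0 from ha]) (by simpa using hpk _ (hsnd ha)))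
  obtain ⟨σ, hσ⟩ := exists_section_of_sq_ker_eq_bot hρ hτ hτsq hτpk
  refine ⟨(RingHom.snd V C).comp (E.subtype.comp σ), RingHom.ext fun v => ?_⟩
  have hfst : (σ v).1.1 = v := RingHom.congr_fun hσ v
  exact (hE (σ v)).symm.trans (by rw [hfst])

lemma exists_lift_of_pow_ker_eq_bot (hρ : IsFlatReduction p ρ) (n : ℕ) {C : Type*} [CommRing C]
    {π : C →+* k} (hπ : Function.Surjective π) (hn : RingHom.ker π ^ (n + 1) = ⊥) :
    ∃ g : V →+* C, π.comp g = ρ := by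
  induction n generalizing C with
  | zero =>
    have hinj : Function.Injective π := by
      rwa [RingHom.injective_iff_ker_eq_bot, ← pow_one (RingHom.ker π)]
    exact ⟨(RingEquiv.ofBijective π ⟨hinj, hπ⟩).symm.toRingHom.comp ρ,
      RingHom.ext fun v => (RingEquiv.ofBijective π ⟨hinj, hπ⟩).apply_symm_apply (ρ v)⟩
  | succ n ih =>
    let I := RingHom.ker π ^ (n + 1)
    have hI : I * RingHom.ker π = ⊥ := by rw [← pow_succ, hn]
    have hIle : I ≤ RingHom.ker π := Ideal.pow_le_self n.succ_ne_zero
    let π' : C ⧸ I →+* k := Ideal.Quotient.lift I π hIle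
    have hker' : RingHom.ker π' = (RingHom.ker π).map (Ideal.Quotient.mk I) :=
      Ideal.ker_quotient_lift π hIle
    obtain ⟨g', hg'⟩ := ih (π := π') (Ideal.Quotient.lift_surjective_of_surjective I hIle hπ) (by
      rw [hker', ← Ideal.map_pow, Ideal.map_quotient_self])
    have hp : (p : C) ∈ RingHom.ker π := by simp [hρ.natCast_eq_zero]
    obtain ⟨g, rfl⟩ := exists_lift_of_sq_ker_eq_bot hρ (Ideal.Quotient.mk_surjective (I := I))
      (by rw [Ideal.mk_ker, eq_bot_iff, ← hI, pow_two]; exact Ideal.mul_mono_right hIle)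
      (fun a ha => by
        rw [Ideal.mk_ker] at ha
        simpa [hI, mul_comm] using Ideal.mul_mem_mul ha hp) g'
    exact ⟨g, by rw [← hg', ← RingHom.comp_assoc]; rfl⟩

theorem exists_lift_of_isNilpotent_ker (hρ : IsFlatReduction p ρ) {π : C →+* k}
    (hπ : Function.Surjective π) (hnil : IsNilpotent (RingHom.ker π)) :
    ∃ g : V →+* C, π.comp g = ρ := by
  obtain ⟨n, hn⟩ := hnil
  exact exists_lift_of_pow_ker_eq_bot hρ n hπ (by
    rw [pow_succ, hn, zero_mul, Submodule.zero_eq_bot])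

end Lifting

section CohenRing

open Polynomial

lemma splits_of_monic_of_isAlgClosed {Ω : Type*} [Field Ω] [IsAlgClosed Ω]
    {B : ValuationSubring Ω} {f : B[X]} (hf : f.Monic) : f.Splits := by
  refine Splits.of_splits_map_of_injective (IsFractionRing.injective B Ω)
    (IsAlgClosed.splits _) fun a ha => ?_
  exact IsIntegrallyClosed.isIntegral_iff.1 ⟨f, hf, by
    rw [← eval_map]
    exact (mem_roots'.1 ha).2⟩

theorem exists_isLocalRing_charZero_residueField_hom.{u} (k : Type u) [Field k] :
    ∃ (O : Type u) (_ : CommRing O) (_ : IsDomain O) (_ : IsLocalRing O) (_ : CharZero O),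
      Nonempty (k →+* ResidueField O) ∧ ∀ f : O[X], f.Monic → f.Splits := by
  let S := MvPolynomial k ℤ
  let ev : S →+* k := MvPolynomial.eval₂Hom (Int.castRingHom k) id
  have hev : Function.Surjective ev := fun a => ⟨MvPolynomial.X a, MvPolynomial.eval₂_X _ _ _⟩
  let Ω := AlgebraicClosure (FractionRing S)
  let j : S →+* Ω := (algebraMap (FractionRing S) Ω).comp (algebraMap S (FractionRing S))
  have hj : Function.Injective j :=
    (algebraMap (FractionRing S) Ω).injective.comp (IsFractionRing.injective S (FractionRing S))
  have hne : (RingHom.ker ev).map j.rangeRestrict ≠ ⊤ :=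
    mt (Ideal.map_eq_top_iff _ (fun _ _ h => hj (congrArg Subtype.val h))
      (RingHom.isIntegral_of_surjective _ j.rangeRestrict_surjective)).1 (RingHom.ker_ne_top ev)
  obtain ⟨B, hjB, hB⟩ := Ideal.image_subset_nonunits_valuationSubring _ hne
  let φ : S →+* B := j.codRestrict B.toSubring fun s => hjB ⟨s, rfl⟩
  have hφ : Function.Injective φ := fun s t h => hj (congrArg Subtype.val h)
  have hker : RingHom.ker ev ≤ RingHom.ker ((residue B).comp φ) := fun s hs =>
    (residue_eq_zero_iff _).2
      (ValuationSubring.coe_mem_nonunits_iff.1 (hB ⟨_, Ideal.mem_map_of_mem _ hs, rfl⟩))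
  exact ⟨B, inferInstance, inferInstance, inferInstance, charZero_of_injective_ringHom hφ,
    ⟨RingHom.liftOfSurjective ev hev ⟨_, hker⟩⟩, fun _ => splits_of_monic_of_isAlgClosed⟩

variable {O : Type*} [CommRing O] [IsLocalRing O]

lemma exists_isRoot_of_splits [IsDomain O] {f : O[X]} (hf : f.Monic) (hs : f.Splits)
    {α : ResidueField O} (hα : aeval α f = 0) : ∃ a, residue O a = α ∧ f.IsRoot a := by
  have hne : f.map (residue O) ≠ 0 := (hf.map _).ne_zero
  have hroot : α ∈ (f.map (residue O)).roots := (mem_roots hne).2 (by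
    rw [IsRoot, eval_map]
    exact hα)
  rw [hs.roots_map_of_ne_zero hne, Multiset.mem_map] at hroot
  obtain ⟨a, ha, rfl⟩ := hroot
  exact ⟨a, rfl, isRoot_of_mem_roots ha⟩

lemma exists_lift_forall_mem_adjoin_exists_aeval_eq [IsDomain O]
    (hsplit : ∀ f : O[X], f.Monic → f.Splits) {S K : Type*} [CommRing S] [Field K] [Algebra S O]
    [Algebra S K] [Algebra K (ResidueField O)] [IsScalarTower S K (ResidueField O)]
    (hK : Function.Surjective (algebraMap S K)) (α : ResidueField O) :
    ∃ a, residue O a = α ∧ ∀ z ∈ Algebra.adjoin S {a}, ∃ g : S[X], aeval a g = z ∧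
      ∀ h : S[X], h.degree ≤ g.degree → residue O (aeval a h) = 0 → h.map (algebraMap S K) = 0 := by
  have haeval (a : O) (h : S[X]) :
      aeval (residue O a) (h.map (algebraMap S K)) = residue O (aeval a h) := by
    rw [aeval_map_algebraMap]
    exact aeval_algebraMap_apply (ResidueField O) a h
  by_cases hα : IsIntegral K α
  · obtain ⟨f, hfm, hfd, hf⟩ := lifts_and_degree_eq_and_monic
      ((lifts_iff_coeff_lifts (f := algebraMap S K) _).2 fun _ => hK _) (minpoly.monic hα)
    have hfα : aeval α f = 0 := by rw [← aeval_map_algebraMap K, hfm, minpoly.aeval]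
    obtain ⟨a, rfl, ha⟩ := exists_isRoot_of_splits (hf.map (algebraMap S O)) (hsplit _ (hf.map _))
      (by rwa [aeval_map_algebraMap])
    refine ⟨a, rfl, fun z hz => ?_⟩
    have : Nontrivial S := (algebraMap S K).domain_nontrivial
    obtain ⟨g, hg, rfl⟩ := exists_degree_lt_aeval_eq_of_mem_adjoin_singleton hf
      (by rwa [IsRoot, eval_map_algebraMap] at ha) hz
    refine ⟨g, rfl, fun h hh h0 => eq_zero_of_dvd_of_degree_lt
      (minpoly.dvd K _ ((haeval a h).trans h0)) ?_⟩
    exact degree_map_le.trans_lt (hh.trans_lt (hg.trans_eq hfd))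
  · obtain ⟨a, rfl⟩ := residue_surjective α
    refine ⟨a, rfl, fun z hz => ?_⟩
    rw [Algebra.adjoin_singleton_eq_range_aeval] at hz
    obtain ⟨g, rfl⟩ := hz
    refine ⟨g, rfl, fun h _ h0 => ?_⟩
    by_contra hne
    exact hα (isAlgebraic_iff_isIntegral.1 ⟨_, hne, (haeval a h).trans h0⟩)

/-- A subring of `O` with residues in `F` in which every nonzero element is a power of `p` times a
unit of `O`. The maximal such subrings turn out to be discrete valuation rings with uniformizer
`p` and residue field `F`. -/
structure IsUnramifiedSubring (p : ℕ) (F : Subfield (ResidueField O)) (V : Subring O) : Prop where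
  residue_mem : ∀ v ∈ V, residue O v ∈ F
  exists_eq_pow_mul : ∀ v ∈ V, v ≠ 0 → ∃ m : ℕ, ∃ u ∈ V, IsUnit u ∧ v = p ^ m * u

variable {p : ℕ} {F : Subfield (ResidueField O)} {V : Subring O}

lemma isUnit_intCast_of_isCoprime (hp : (p : O) ∈ maximalIdeal O) {c : ℤ}
    (hc : IsCoprime (p : ℤ) c) : IsUnit (c : O) := by
  obtain ⟨a, b, hab⟩ := hc
  have hsum : IsUnit ((a : O) * p + b * c) := by
    rw [show (a : O) * p + b * c = 1 by exact_mod_cast congrArg (Int.cast : ℤ → O) hab]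
    exact isUnit_one
  exact isUnit_of_mul_isUnit_right ((isUnit_or_isUnit_of_isUnit_add hsum).resolve_left
    fun h => hp (isUnit_of_mul_isUnit_right h))

namespace IsUnramifiedSubring

lemma bot (hpp : p.Prime) (hp : (p : O) ∈ maximalIdeal O) :
    IsUnramifiedSubring p F (⊥ : Subring O) := by
  constructor
  · intro v hv
    obtain ⟨z, rfl⟩ := Subring.mem_bot.1 hv
    exact (map_intCast (residue O) z).symm ▸ intCast_mem F z
  · intro v hv hv0
    obtain ⟨z, rfl⟩ := Subring.mem_bot.1 hv
    have hz : z ≠ 0 := by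
      rintro rfl
      exact hv0 Int.cast_zero
    obtain ⟨c, hc, hpc⟩ := (Int.finiteMultiplicity_iff.2
      ⟨by simpa using hpp.ne_one, hz⟩ : FiniteMultiplicity (p : ℤ) z).exists_eq_pow_mul_and_not_dvd
    have hcop := (Prime.coprime_iff_not_dvd (Nat.prime_iff_prime_int.1 hpp)).2 hpc
    exact ⟨_, c, Subring.mem_bot.2 ⟨c, rfl⟩, isUnit_intCast_of_isCoprime hp hcop,
      by exact_mod_cast congrArg (Int.cast : ℤ → O) hc⟩

lemma exists_maximal (hpp : p.Prime) (hp : (p : O) ∈ maximalIdeal O)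
    (F : Subfield (ResidueField O)) : ∃ V : Subring O, Maximal (IsUnramifiedSubring p F) V := by
  have hbound : ∀ c ⊆ {V | IsUnramifiedSubring p F V}, IsChain (· ≤ ·) c → ∀ V ∈ c,
      ∃ W ∈ {V | IsUnramifiedSubring p F V}, ∀ U ∈ c, U ≤ W := by
    intro c hc hchain V hV
    have hmem (v : O) : v ∈ sSup c ↔ ∃ W ∈ c, v ∈ W :=
      Subring.mem_sSup_of_directedOn ⟨V, hV⟩ hchain.directedOn
    refine ⟨sSup c, ⟨fun v hv => ?_, fun v hv hv0 => ?_⟩, fun _ => le_sSup⟩ <;>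
      obtain ⟨W, hW, hvW⟩ := (hmem v).1 hv
    · exact (hc hW).residue_mem v hvW
    · obtain ⟨m, u, hu, huu, hv⟩ := (hc hW).exists_eq_pow_mul v hvW hv0
      exact ⟨m, u, (hmem u).2 ⟨W, hW, hu⟩, huu, hv⟩
  obtain ⟨V, -, hV⟩ := zorn_le_nonempty₀ _ hbound ⊥ (bot hpp hp)
  exact ⟨V, hV⟩

end IsUnramifiedSubring

lemma exists_mul_pow_mem_of_mem_adjoin_inv {E : Type*} [CommRing E] {V : Subring E} {v w z : E}
    (hv : v ∈ V) (hvw : v * w = 1) (hz : z ∈ Algebra.adjoin V {w}) : ∃ n : ℕ, z * v ^ n ∈ V := by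
  induction hz using Algebra.adjoin_induction with
  | mem x hx =>
    obtain rfl := hx
    exact ⟨1, by rw [pow_one, mul_comm, hvw]; exact V.one_mem⟩
  | algebraMap s => exact ⟨0, by rw [pow_zero, mul_one]; exact s.2⟩
  | add x y _ _ hx hy =>
    obtain ⟨⟨m, hm⟩, n, hn⟩ := hx, hy
    refine ⟨m + n, ?_⟩
    rw [show (x + y) * v ^ (m + n) = x * v ^ m * v ^ n + y * v ^ n * v ^ m by ring]
    exact add_mem (mul_mem hm (pow_mem hv n)) (mul_mem hn (pow_mem hv m))
  | mul x y _ _ hx hy =>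
    obtain ⟨⟨m, hm⟩, n, hn⟩ := hx, hy
    exact ⟨m + n, by rw [pow_add, mul_mul_mul_comm]; exact mul_mem hm hn⟩

namespace IsUnramifiedSubring

lemma adjoin_inv (hV : IsUnramifiedSubring p F V) {v w : O} (hv : v ∈ V) (hvw : v * w = 1) :
    IsUnramifiedSubring p F (Algebra.adjoin V {w}).toSubring := by
  have hw : residue O w = (residue O v)⁻¹ :=
    eq_inv_of_mul_eq_one_right (by rw [← map_mul, hvw, map_one])
  have hinv (z : O) (n : ℕ) : z = z * v ^ n * w ^ n := by
    rw [mul_assoc, ← mul_pow, hvw, one_pow, mul_one]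
  constructor <;> intro z hz <;> obtain ⟨n, hn⟩ := exists_mul_pow_mem_of_mem_adjoin_inv hv hvw hz
  · rw [hinv z n, map_mul, map_pow, hw]
    exact mul_mem (hV.residue_mem _ hn) (pow_mem (inv_mem (hV.residue_mem _ hv)) n)
  · intro hz0
    obtain ⟨m, u, hu, huu, hmu⟩ := hV.exists_eq_pow_mul _ hn fun h => hz0 (by
      rw [hinv z n, h, zero_mul])
    refine ⟨m, u * w ^ n, mul_mem (le_adjoin_singleton_toSubring V w hu)
      (pow_mem (mem_adjoin_singleton_toSubring V w) n),
      huu.mul ((IsUnit.of_mul_eq_one_right v hvw).pow n), ?_⟩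
    rw [← mul_assoc, ← hmu, ← hinv]

lemma isUnit_of_not_dvd (hV : IsUnramifiedSubring p F V) {v : V} (hv : ¬ (p : V) ∣ v) :
    IsUnit (v : O) := by
  obtain ⟨m, u, hu, huu, hmu⟩ := hV.exists_eq_pow_mul v v.2 fun h =>
    hv (ZeroMemClass.coe_eq_zero.1 h ▸ dvd_zero _)
  cases m with
  | zero => rwa [hmu, pow_zero, one_mul]
  | succ m =>
    refine absurd ⟨(p : V) ^ m * ⟨u, hu⟩, Subtype.ext ?_⟩ hv
    rw [hmu, pow_succ']
    simp [mul_assoc]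

variable [IsDomain O] [CharZero O]

lemma finiteMultiplicity (hV : IsUnramifiedSubring p F V) (hp0 : p ≠ 0)
    (hp : (p : O) ∈ maximalIdeal O) {v : V} (hv : v ≠ 0) : FiniteMultiplicity (p : V) v := by
  obtain ⟨m, u, -, huu, hmu⟩ := hV.exists_eq_pow_mul v v.2 (Subtype.coe_ne_coe.2 hv)
  refine ⟨m, fun hdvd => hp (isUnit_of_dvd_unit ?_ huu)⟩
  have hdvd' : (p : O) ^ (m + 1) ∣ v := by simpa using map_dvd V.subtype hdvd
  rwa [hmu, pow_succ, mul_dvd_mul_iff_left (pow_ne_zero m (Nat.cast_ne_zero.2 hp0))] at hdvd'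

lemma exists_eq_C_pow_mul (hV : IsUnramifiedSubring p F V) (hp0 : p ≠ 0)
    (hp : (p : O) ∈ maximalIdeal O) {g : V[X]} (hg : g ≠ 0) :
    ∃ (m : ℕ) (h : V[X]), g = C (p : V) ^ m * h ∧ ∃ i, IsUnit (h.coeff i : O) := by
  obtain ⟨i, hi⟩ := support_nonempty.2 hg
  obtain ⟨m, hm⟩ := hV.finiteMultiplicity hp0 hp (mem_support_iff.1 hi)
  have hfin : FiniteMultiplicity (C (p : V)) g :=
    ⟨m, fun hdvd => hm ((C_dvd_iff_dvd_coeff _ _).1 (by rwa [C_pow]) i)⟩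
  obtain ⟨h, hgh, hh⟩ := hfin.exists_eq_pow_mul_and_not_dvd
  rw [C_dvd_iff_dvd_coeff, not_forall] at hh
  exact ⟨_, h, hgh, hh.imp fun i => hV.isUnit_of_not_dvd⟩

lemma adjoin (hV : IsUnramifiedSubring p F V) (hp0 : p ≠ 0) (hp : (p : O) ∈ maximalIdeal O) {a : O}
    (ha : residue O a ∈ F)
    (hgen : ∀ z ∈ Algebra.adjoin V {a}, ∃ g : V[X], aeval a g = z ∧ ∀ h : V[X],
      h.degree ≤ g.degree → residue O (aeval a h) = 0 → ∀ i, residue O (h.coeff i) = 0) :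
    IsUnramifiedSubring p F (Algebra.adjoin V {a}).toSubring := by
  constructor <;> intro z hz <;> obtain ⟨g, rfl, hg⟩ := hgen z hz
  · rw [aeval_eq_sum_range, map_sum]
    refine sum_mem fun i _ => ?_
    rw [Algebra.smul_def, map_mul, map_pow]
    exact mul_mem (hV.residue_mem _ (g.coeff i).2) (pow_mem ha i)
  · intro hz0
    obtain ⟨m, h, rfl, i, hi⟩ := hV.exists_eq_C_pow_mul hp0 hp (g := g) (by
      rintro rfl
      exact hz0 (map_zero _))
    refine ⟨m, aeval a h, aeval_mem_adjoin_singleton _ _, ?_, by simp⟩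
    rw [← residue_ne_zero_iff_isUnit]
    refine fun h0 => (residue_ne_zero_iff_isUnit _).2 hi (hg h ?_ h0 i)
    have hpV : (p : V) ≠ 0 := fun h => hp0 (by exact_mod_cast congrArg Subtype.val h)
    rw [← C_pow, degree_C_mul (pow_ne_zero m hpV)]

end IsUnramifiedSubring

lemma mem_of_maximal_isUnramifiedSubring (hV : Maximal (IsUnramifiedSubring p F) V) {v w : O}
    (hv : v ∈ V) (hvw : v * w = 1) : w ∈ V :=
  hV.2 (hV.1.adjoin_inv hv hvw) (le_adjoin_singleton_toSubring V w)
    (mem_adjoin_singleton_toSubring V w)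

lemma isDiscreteValuationRing_of_maximal_isUnramifiedSubring [IsDomain O] (hp : Prime (p : V))
    (hV : Maximal (IsUnramifiedSubring p F) V) : IsDiscreteValuationRing V := by
  refine IsDiscreteValuationRing.ofHasUnitMulPowIrreducibleFactorization
    ⟨p, hp.irreducible, fun {v} hv => ?_⟩
  obtain ⟨m, u, hu, huu, hmu⟩ := hV.1.exists_eq_pow_mul v v.2 (Subtype.coe_ne_coe.2 hv)
  obtain ⟨w, huw⟩ := huu.exists_right_inv
  have hunit : IsUnit (⟨u, hu⟩ : V) := IsUnit.of_mul_eq_one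
    ⟨w, mem_of_maximal_isUnramifiedSubring hV hu huw⟩ (Subtype.ext huw)
  exact ⟨m, hunit.unit, Subtype.ext (by simp [hmu])⟩

variable [IsDomain O] [CharZero O]

lemma exists_residue_eq_of_maximal_isUnramifiedSubring (hp0 : p ≠ 0)
    (hp : (p : O) ∈ maximalIdeal O) (hsplit : ∀ f : O[X], f.Monic → f.Splits)
    (hV : Maximal (IsUnramifiedSubring p F) V) {α : ResidueField O} (hα : α ∈ F) :
    ∃ v ∈ V, residue O v = α := by
  let K : Subfield (ResidueField O) :=
    { V.map (residue O) with
      inv_mem' := by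
        rintro _ ⟨v, hv, rfl⟩
        by_cases h0 : residue O v = 0
        · exact ⟨0, V.zero_mem, by simp [h0]⟩
        · obtain ⟨w, hw⟩ := ((residue_ne_zero_iff_isUnit v).1 h0).exists_right_inv
          exact ⟨w, mem_of_maximal_isUnramifiedSubring hV hv hw,
            eq_inv_of_mul_eq_one_right (by rw [← map_mul, hw, map_one])⟩ }
  let q : V →+* K := ((residue O).comp V.subtype).codRestrict K fun v => ⟨v, v.2, rfl⟩
  have hq : Function.Surjective q := fun ⟨_, v, hv, hvα⟩ => ⟨⟨v, hv⟩, Subtype.ext hvα⟩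
  let _ : Algebra V K := q.toAlgebra
  have : IsScalarTower V K (ResidueField O) := IsScalarTower.of_algebraMap_eq fun _ => rfl
  obtain ⟨a, rfl, ha⟩ := exists_lift_forall_mem_adjoin_exists_aeval_eq hsplit hq α
  have hadjoin : IsUnramifiedSubring p F (Algebra.adjoin V {a}).toSubring := by
    refine hV.1.adjoin hp0 hp hα fun z hz => ?_
    obtain ⟨g, hgz, hg⟩ := ha z hz
    refine ⟨g, hgz, fun h hdeg h0 i => ?_⟩
    have hcoeff : q (h.coeff i) = 0 := by
      rw [← coeff_map]
      exact (congrArg (coeff · i) (hg h hdeg h0)).trans (coeff_zero i)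
    exact congrArg Subtype.val hcoeff
  exact ⟨a, hV.2 hadjoin (le_adjoin_singleton_toSubring V a)
    (mem_adjoin_singleton_toSubring V a), rfl⟩

lemma isFlatReduction_of_maximal_isUnramifiedSubring (hp0 : p ≠ 0)
    (hp : (p : O) ∈ maximalIdeal O) (hsplit : ∀ f : O[X], f.Monic → f.Splits)
    (hV : Maximal (IsUnramifiedSubring p F) V) :
    IsFlatReduction p (((residue O).comp V.subtype).codRestrict F
      fun v => hV.1.residue_mem v v.2) where
  surjective := fun ⟨α, hα⟩ => by
    obtain ⟨v, hv, rfl⟩ := exists_residue_eq_of_maximal_isUnramifiedSubring hp0 hp hsplit hV hα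
    exact ⟨⟨v, hv⟩, rfl⟩
  ker_eq := by
    ext v
    rw [RingHom.mem_ker, Ideal.mem_span_singleton]
    constructor
    · intro hv
      by_contra hdvd
      exact (residue_ne_zero_iff_isUnit _).2 (hV.1.isUnit_of_not_dvd hdvd) (congrArg Subtype.val hv)
    · rintro ⟨w, rfl⟩
      have hpF : (p : F) = 0 := Subtype.ext (by
        push_cast
        rw [← map_natCast (residue O), (residue_eq_zero_iff (p : O)).2 hp])
      simp [hpF]
  mem_nonZeroDivisors := mem_nonZeroDivisors_of_ne_zero fun h =>
    hp0 (by exact_mod_cast congrArg Subtype.val h)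

theorem exists_isDiscreteValuationRing_isFlatReduction.{u} (k : Type u) [Field k] (p : ℕ)
    [Fact p.Prime] [CharP k p] :
    ∃ (V : Type u) (_ : CommRing V) (_ : IsDomain V) (_ : IsDiscreteValuationRing V)
      (ρ : V →+* k), IsFlatReduction p ρ := by
  have hpp : p.Prime := Fact.out
  obtain ⟨O, _, _, _, _, ⟨ι⟩, hsplit⟩ := exists_isLocalRing_charZero_residueField_hom k
  have hp : (p : O) ∈ maximalIdeal O := (residue_eq_zero_iff _).1 (by
    rw [map_natCast, ← map_natCast ι, CharP.cast_eq_zero, map_zero])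
  obtain ⟨V, hV⟩ := IsUnramifiedSubring.exists_maximal hpp hp ι.fieldRange
  have hρ := isFlatReduction_of_maximal_isUnramifiedSubring hpp.ne_zero hp hsplit hV
  have hprime : Prime (p : V) :=
    (Ideal.span_singleton_prime (nonZeroDivisors.ne_zero hρ.mem_nonZeroDivisors)).1
      (hρ.ker_eq ▸ RingHom.ker_isPrime _)
  let e : k ≃+* ι.fieldRange := RingEquiv.ofBijective ι.rangeRestrictField
    ⟨fun _ _ h => ι.injective (congrArg Subtype.val h), fun ⟨_, a, ha⟩ => ⟨a, Subtype.ext ha⟩⟩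
  exact ⟨V, inferInstance, inferInstance,
    isDiscreteValuationRing_of_maximal_isUnramifiedSubring hprime hV, e.symm.toRingHom.comp _,
    e.symm.surjective.comp hρ.surjective, (RingHom.ker_equiv_comp _ e.symm).trans hρ.ker_eq,
    hρ.mem_nonZeroDivisors⟩

end CohenRing

section CoefficientRing

variable {C : Type*} [CommRing C] [IsLocalRing C]

lemma exists_residueField_lift_of_charZero [CharZero (ResidueField C)]
    (hnil : IsNilpotent (maximalIdeal C)) :
    ∃ g : ResidueField C →+* C, (residue C).comp g = RingHom.id (ResidueField C) := by
  have hunit (z : nonZeroDivisors ℤ) : IsUnit (Int.castRingHom C z) := by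
    rw [← residue_ne_zero_iff_isUnit]
    simp
  let _ : Algebra ℚ C := (IsLocalization.lift hunit : ℚ →+* C).toAlgebra
  obtain ⟨s, hs⟩ := exists_isTranscendenceBasis ℚ (ResidueField C)
  have := hs.isAlgebraic_field
  have : Algebra.FormallySmooth ℚ (ResidueField C) :=
    Algebra.FormallySmooth.of_algebraicIndependent_of_isSeparable hs.1
  let π : C →ₐ[ℚ] ResidueField C :=
    { residue C with
      commutes' := RingHom.congr_fun (Subsingleton.elim ((residue C).comp (algebraMap ℚ C)) _) }
  have hker : IsNilpotent (RingHom.ker π) := by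
    change IsNilpotent (RingHom.ker (residue C))
    rwa [ker_residue]
  exact ⟨(Algebra.FormallySmooth.liftOfSurjective (AlgHom.id ℚ _) π residue_surjective hker :
    ResidueField C →+* C), RingHom.ext
      (Algebra.FormallySmooth.liftOfSurjective_apply _ π residue_surjective hker)⟩

theorem exists_isDiscreteValuationRing_residue_comp_surjective.{u} {C : Type u} [CommRing C]
    [IsLocalRing C] (hnil : IsNilpotent (maximalIdeal C)) :
    ∃ (V : Type u) (_ : CommRing V) (_ : IsDomain V) (_ : IsDiscreteValuationRing V)
      (g : V →+* C), Function.Surjective ((residue C).comp g) := by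
  obtain ⟨p, hp⟩ := CharP.exists (ResidueField C)
  rcases CharP.char_is_prime_or_zero (ResidueField C) p with hpp | rfl
  · have : Fact p.Prime := ⟨hpp⟩
    obtain ⟨V, _, _, hV, ρ, hρ⟩ := exists_isDiscreteValuationRing_isFlatReduction (ResidueField C) p
    obtain ⟨g, rfl⟩ := exists_lift_of_isNilpotent_ker hρ residue_surjective (by rwa [ker_residue])
    exact ⟨V, _, _, hV, g, hρ.surjective⟩
  · have : CharZero (ResidueField C) := CharP.charP_to_charZero _
    obtain ⟨g, hg⟩ := exists_residueField_lift_of_charZero hnil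
    refine ⟨PowerSeries (ResidueField C), inferInstance, inferInstance, inferInstance,
      g.comp PowerSeries.constantCoeff, ?_⟩
    rw [← RingHom.comp_assoc, hg, RingHom.id_comp]
    exact fun a => ⟨PowerSeries.C a, by simp⟩

end CoefficientRing

section NilpotentNakayama

lemma sup_pow_smul_top_eq_top {R M : Type*} [CommRing R] [AddCommGroup M] [Module R M]
    {I : Ideal R} {N : Submodule R M} (h : N ⊔ I • ⊤ = ⊤) (k : ℕ) : N ⊔ I ^ k • ⊤ = ⊤ := by
  induction k with
  | zero => simp
  | succ k ih =>
    have hle : I ^ k • ⊤ ≤ N ⊔ I ^ (k + 1) • ⊤ := by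
      rw [← h, Submodule.smul_sup, ← Submodule.mul_smul, ← pow_succ, h]
      exact sup_le_sup_right Submodule.smul_le_right _
    exact top_le_iff.1 (ih.ge.trans (sup_le le_sup_left hle))

lemma surjective_of_surjective_quotientMk_comp {R S : Type*} [CommRing R] [CommRing S]
    {f : R →+* S} {I : Ideal R} (hnil : IsNilpotent (I.map f))
    (h : Function.Surjective ((Ideal.Quotient.mk (I.map f)).comp f)) : Function.Surjective f := by
  let _ : Algebra R S := f.toAlgebra
  have htop : LinearMap.range (Algebra.linearMap R S) ⊔ I • ⊤ = ⊤ := by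
    refine eq_top_iff.2 fun c _ => ?_
    obtain ⟨a, ha⟩ := h (Ideal.Quotient.mk _ c)
    rw [Ideal.smul_top_eq_map]
    exact Submodule.mem_sup.2 ⟨f a, ⟨a, rfl⟩, c - f a, Ideal.Quotient.eq.1 ha.symm, by simp⟩
  obtain ⟨k, hk⟩ := hnil
  have hpow : I ^ k • (⊤ : Submodule R S) = ⊥ := by
    rw [Ideal.smul_top_eq_map, Ideal.map_pow, RingHom.algebraMap_toAlgebra, hk]
    rfl
  have hrange := sup_pow_smul_top_eq_top htop k
  rw [hpow, sup_bot_eq] at hrange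
  exact LinearMap.range_eq_top.1 hrange

end NilpotentNakayama

section RegularCover

open RingTheory.Sequence
open scoped Pointwise

lemma isRegular_quotient_span_singleton_of_cons {R : Type*} [CommRing R] {r : R} {l : List R}
    (h : IsRegular R (r :: l)) :
    IsRegular (R ⧸ Ideal.span {r}) (l.map (Ideal.Quotient.mk (Ideal.span {r}))) := by
  have hspan : r • (⊤ : Submodule R R) = Ideal.span {r} := by
    rw [← Submodule.ideal_span_singleton_smul, smul_eq_mul, Ideal.mul_top]
  refine ((Submodule.quotEquivOfEq _ _ hspan).toAddEquiv.isRegular_congr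
    (List.forall₂_map_right_iff.2 (List.forall₂_same.2 fun s _ q => ?_))).1
    ((isRegular_cons_iff R r l).1 h).2
  obtain ⟨q, rfl⟩ := Submodule.Quotient.mk_surjective _ q
  rfl

section Polynomials

variable {σ V : Type*} [CommRing V]

open Classical in
/-- The substitution of `0` for the variables in `s`. -/
noncomputable def substZero (s : Set σ) : MvPolynomial σ V →ₐ[V] MvPolynomial σ V :=
  MvPolynomial.aeval fun j => if j ∈ s then 0 else MvPolynomial.X j

lemma ker_substZero (s : Set σ) : RingHom.ker (substZero s : MvPolynomial σ V →ₐ[V] _) =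
    Ideal.span (MvPolynomial.X '' s) := by
  classical
  apply le_antisymm
  · intro a ha
    have hcongr : (Ideal.Quotient.mkₐ V (Ideal.span (MvPolynomial.X '' s))).comp (substZero s) =
        Ideal.Quotient.mkₐ V (Ideal.span (MvPolynomial.X '' s)) := by
      refine MvPolynomial.algHom_ext fun j => ?_
      by_cases hj : j ∈ s
      · simpa [substZero, hj] using (Ideal.Quotient.eq_zero_iff_mem.2
          (Ideal.subset_span (Set.mem_image_of_mem _ hj))).symm
      · simp [substZero, hj]
    rw [← Ideal.Quotient.eq_zero_iff_mem]
    have := AlgHom.congr_fun hcongr a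
    simpa [RingHom.mem_ker.1 ha] using this.symm
  · rw [Ideal.span_le]
    rintro _ ⟨j, hj, rfl⟩
    simp [substZero, hj]

lemma isPrime_span_image_X [IsDomain V] (s : Set σ) :
    (Ideal.span (MvPolynomial.X '' s) : Ideal (MvPolynomial σ V)).IsPrime :=
  ker_substZero (V := V) s ▸ RingHom.ker_isPrime _

lemma ofList_map_X (l : List σ) : Ideal.ofList (l.map (MvPolynomial.X : σ → MvPolynomial σ V)) =
    Ideal.span ((MvPolynomial.X : σ → MvPolynomial σ V) '' {j | j ∈ l}) :=
  congrArg Ideal.span (Set.ext fun _ => List.mem_map)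

lemma isWeaklyRegular_append_singleton_of_isPrime {R : Type*} [CommRing R] {l : List R} {a : R}
    (hl : IsWeaklyRegular R l) (hprime : (Ideal.ofList l).IsPrime) (ha : a ∉ Ideal.ofList l) :
    IsWeaklyRegular R (l ++ [a]) := by
  rw [isWeaklyRegular_append_iff, isWeaklyRegular_singleton_iff, smul_eq_mul, Ideal.mul_top,
    isSMulRegular_quotient_iff_mem_of_smul_mem]
  exact ⟨hl, fun b hb => (hprime.mem_or_mem hb).resolve_left ha⟩

lemma isWeaklyRegular_map_X [IsDomain V] {l : List σ} (hl : l.Nodup) :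
    IsWeaklyRegular (MvPolynomial σ V) (l.map (MvPolynomial.X : σ → MvPolynomial σ V)) := by
  induction l using List.reverseRecOn with
  | nil => exact .nil _ _
  | append_singleton l j ih =>
    obtain ⟨hl, -, hdisj⟩ := List.nodup_append.1 hl
    rw [List.map_append]
    refine isWeaklyRegular_append_singleton_of_isPrime (ih hl) ?_ ?_
    · rw [ofList_map_X]
      exact isPrime_span_image_X _
    · rw [ofList_map_X, ← ker_substZero, RingHom.mem_ker]
      have hj : j ∉ l := fun hj => hdisj j hj j (by simp) rfl
      simp [substZero, hj]

lemma ker_constantCoeff : RingHom.ker (MvPolynomial.constantCoeff (R := V) (σ := σ)) =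
    MvPolynomial.idealOfVars σ V := by
  ext a
  rw [← pow_one (MvPolynomial.idealOfVars σ V), MvPolynomial.mem_pow_idealOfVars_iff']
  simp [MvPolynomial.constantCoeff_eq, Finsupp.degree_eq_zero_iff]

lemma isWeaklyRegular_ofFn_X_append_singleton [IsDomain V] {n : ℕ} {t : MvPolynomial (Fin n) V}
    (ht : MvPolynomial.constantCoeff t ≠ 0) :
    IsWeaklyRegular (MvPolynomial (Fin n) V) (List.ofFn MvPolynomial.X ++ [t]) := by
  refine isWeaklyRegular_append_singleton_of_isPrime ?_ ?_ ?_
  · rw [List.ofFn_eq_map]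
    exact isWeaklyRegular_map_X (List.nodup_finRange n)
  · rw [ofList_ofFn, ← MvPolynomial.idealOfVars, ← ker_constantCoeff]
    exact RingHom.ker_isPrime _
  · rwa [ofList_ofFn, ← MvPolynomial.idealOfVars, ← ker_constantCoeff]

-- Modulo the variables, `f` is the map `V → C` and `t` is `ϖ`.
lemma exists_comap_maximalIdeal_eq_idealOfVars_sup_span_singleton {C : Type*} [CommRing C]
    [IsLocalRing C] {f : MvPolynomial σ V →+* C} (hf : Function.Surjective f)
    (hvars : (MvPolynomial.idealOfVars σ V).map f = maximalIdeal C) {ϖ : V}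
    (hϖ : (maximalIdeal C).comap (f.comp MvPolynomial.C) = Ideal.span {ϖ}) :
    ∃ t, f t = 0 ∧ MvPolynomial.constantCoeff t = ϖ ∧
      (maximalIdeal C).comap f = MvPolynomial.idealOfVars σ V ⊔ Ideal.span {t} := by
  obtain ⟨b, hb, hbϖ⟩ := (Ideal.mem_map_iff_of_surjective f hf).1
    (hvars.ge (hϖ.ge (Ideal.mem_span_singleton_self ϖ)))
  have hb0 : MvPolynomial.constantCoeff b = 0 := by rwa [← RingHom.mem_ker, ker_constantCoeff]
  have ht : f (MvPolynomial.C ϖ - b) = 0 := by rw [map_sub, hbϖ, RingHom.comp_apply, sub_self]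
  refine ⟨MvPolynomial.C ϖ - b, ht, by simp [hb0], le_antisymm (fun a ha => ?_) ?_⟩
  · have hconst : a - MvPolynomial.C (MvPolynomial.constantCoeff a) ∈
        MvPolynomial.idealOfVars σ V := by
      simp [← ker_constantCoeff]
    have hCa : MvPolynomial.constantCoeff a ∈ (maximalIdeal C).comap (f.comp MvPolynomial.C) := by
      simpa using sub_mem ha (Ideal.map_le_iff_le_comap.1 hvars.le hconst)
    obtain ⟨v, hv⟩ := Ideal.mem_span_singleton'.1 (hϖ.le hCa)
    refine mem_sup_span_singleton_iff.2 ⟨MvPolynomial.C v, ?_⟩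
    convert add_mem hconst (Ideal.mul_mem_left _ (MvPolynomial.C v) hb) using 1
    rw [← hv, map_mul]
    ring
  · refine sup_le (Ideal.map_le_iff_le_comap.1 hvars.le) ?_
    rw [Ideal.span_singleton_le_iff_mem, Ideal.mem_comap, ht]
    exact zero_mem _

end Polynomials

lemma exists_isRegular_cover_of_isWeaklyRegular.{u} {P : Type u} {C : Type*} [CommRing P]
    [IsNoetherianRing P] [CommRing C] [IsLocalRing C] {f : P →+* C} (hf : Function.Surjective f)
    {n : ℕ} {y : Fin n → P} {t : P} (ht : f t = 0)
    (hspan : (maximalIdeal C).comap f = Ideal.ofList (List.ofFn y ++ [t]))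
    (hreg : IsWeaklyRegular P (List.ofFn y ++ [t])) :
    ∃ (R : Type u) (_ : CommRing R) (_ : IsLocalRing R) (_ : IsNoetherianRing R)
      (F : R →+* C) (w : Fin n → R), Function.Surjective F ∧
      Ideal.span (Set.range w) = maximalIdeal R ∧ IsRegular R (List.ofFn w) ∧
      ∀ i, F (w i) = f (y i) := by
  let 𝔭 : Ideal P := (maximalIdeal C).comap f
  let Q := Localization.AtPrime 𝔭
  let φ := algebraMap P Q
  have hunit (a : 𝔭.primeCompl) : IsUnit (f a) := notMem_maximalIdeal.1 a.2
  let F : Q →+* C := IsLocalization.lift hunit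
  have hF (a : P) : F (φ a) = f a := IsLocalization.lift_eq hunit a
  have hperm : ((List.ofFn y ++ [t]).map φ).Perm (φ t :: List.ofFn (φ ∘ y)) := by
    rw [List.map_append, List.map_ofFn]
    exact List.perm_append_singleton _ _
  have hmax : maximalIdeal Q = Ideal.ofList (φ t :: List.ofFn (φ ∘ y)) := by
    rw [← IsLocalization.AtPrime.map_eq_maximalIdeal 𝔭 Q, ← ofList_eq_of_perm hperm,
      ← Ideal.map_ofList, ← hspan]
  have hregQ : IsRegular Q (φ t :: List.ofFn (φ ∘ y)) :=
    isRegular_of_perm (IsWeaklyRegular.isRegular_of_isLocalization_of_mem Q 𝔭 hreg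
      fun r hr => hspan.ge (Ideal.subset_span hr)) hperm
  let π := Ideal.Quotient.mk (Ideal.span {φ t})
  have hregR : IsRegular (Q ⧸ Ideal.span {φ t}) (List.ofFn (π ∘ φ ∘ y)) := by
    simpa only [List.map_ofFn] using isRegular_quotient_span_singleton_of_cons hregQ
  have := hregR.nontrivial
  have hloc : IsLocalRing (Q ⧸ Ideal.span {φ t}) := .of_surjective' π Ideal.Quotient.mk_surjective
  have hker (a : Q) (ha : a ∈ Ideal.span {φ t}) : F a = 0 := by
    obtain ⟨b, rfl⟩ := Ideal.mem_span_singleton'.1 ha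
    rw [map_mul, hF, ht, mul_zero]
  refine ⟨_, _, hloc, inferInstance, Ideal.Quotient.lift _ F hker, π ∘ φ ∘ y, ?_, ?_, hregR,
    fun i => (Ideal.Quotient.lift_mk _ F hker).trans (hF (y i))⟩
  · intro c
    obtain ⟨a, rfl⟩ := hf c
    exact ⟨π (φ a), (Ideal.Quotient.lift_mk _ F hker).trans (hF a)⟩
  · rw [← map_maximalIdeal_of_surjective π Ideal.Quotient.mk_surjective, hmax,
      Ideal.map_ofList, List.map_cons, Ideal.ofList_cons, List.map_ofFn, ofList_ofFn]
    simp [π]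

theorem exists_isRegular_cover.{u} {C : Type u} [CommRing C] [IsLocalRing C]
    (hnil : IsNilpotent (maximalIdeal C)) {n : ℕ} {u : Fin n → C}
    (hu : Ideal.span (Set.range u) = maximalIdeal C) :
    ∃ (R : Type u) (_ : CommRing R) (_ : IsLocalRing R) (_ : IsNoetherianRing R)
      (f : R →+* C) (w : Fin n → R), Function.Surjective f ∧
      Ideal.span (Set.range w) = maximalIdeal R ∧ IsRegular R (List.ofFn w) ∧
      ∀ i, f (w i) = u i := by
  obtain ⟨V, _, _, _, g, hg⟩ := exists_isDiscreteValuationRing_residue_comp_surjective hnil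
  obtain ⟨ϖ, hϖ⟩ := IsDiscreteValuationRing.exists_irreducible V
  have hgV : RingHom.ker ((residue C).comp g) = Ideal.span {ϖ} := by
    rw [← hϖ.maximalIdeal_eq]
    exact eq_maximalIdeal (RingHom.ker_isMaximal_of_surjective _ hg)
  let f : MvPolynomial (Fin n) V →+* C := MvPolynomial.eval₂Hom g u
  have hfX (i) : f (MvPolynomial.X i) = u i := MvPolynomial.eval₂Hom_X' g u i
  have hfC (v : V) : f (MvPolynomial.C v) = g v := MvPolynomial.eval₂Hom_C g u v
  have hvars : (MvPolynomial.idealOfVars (Fin n) V).map f = maximalIdeal C := by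
    rw [Ideal.map_span, ← Set.range_comp, ← hu]
    exact congrArg (Ideal.span ∘ Set.range) (funext hfX)
  have hf : Function.Surjective f := by
    refine surjective_of_surjective_quotientMk_comp (hvars ▸ hnil) ?_
    rw [hvars]
    intro c
    obtain ⟨v, hv⟩ := hg c
    exact ⟨MvPolynomial.C v, (congrArg (residue C) (hfC v)).trans hv⟩
  obtain ⟨t, ht, htϖ, hcomap⟩ :=
    exists_comap_maximalIdeal_eq_idealOfVars_sup_span_singleton hf hvars (ϖ := ϖ) (by
      rw [← hgV, MvPolynomial.eval₂Hom_comp_C, ← RingHom.comap_ker, ker_residue])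
  obtain ⟨R, _, hR, _, F, w, hF, hw, hregR, hFw⟩ := exists_isRegular_cover_of_isWeaklyRegular hf ht
    (by rw [hcomap, Ideal.ofList_append, Ideal.ofList_singleton, ofList_ofFn,
      MvPolynomial.idealOfVars])
    (isWeaklyRegular_ofFn_X_append_singleton (htϖ ▸ hϖ.ne_zero))
  exact ⟨R, _, hR, inferInstance, F, w, hF, hw, hregR, fun i => (hFw i).trans (hfX i)⟩

end RegularCover

section Dimension

open RingTheory.Sequence

lemma exists_span_range_eq_maximalIdeal (A : Type) [CommRing A] [IsLocalRing A]
    [IsNoetherianRing A] : ∃ u : Fin (edim A) → A, Ideal.span (Set.range u) = maximalIdeal A :=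
  Nat.sInf_mem (Submodule.fg_iff_exists_fin_generating_family.1
    (IsNoetherian.noetherian (maximalIdeal A)))

lemma spanFinrank_maximalIdeal_le_edim (A : Type) [CommRing A] [IsLocalRing A]
    [IsNoetherianRing A] : (maximalIdeal A).spanFinrank ≤ edim A := by
  obtain ⟨u, hu⟩ := exists_span_range_eq_maximalIdeal A
  calc (maximalIdeal A).spanFinrank ≤ (Set.range u).ncard :=
        hu ▸ Submodule.spanFinrank_span_le_ncard_of_finite (Set.finite_range u)
    _ ≤ edim A := by
        rw [← Set.image_univ]
        exact (Set.ncard_image_le Set.finite_univ).trans (by simp [Set.ncard_univ])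

lemma ringKrullDim_eq_of_isRegular_of_span_range_eq_maximalIdeal {R : Type*} [CommRing R]
    [IsLocalRing R] [IsNoetherianRing R] {n : ℕ} {w : Fin n → R}
    (hw : Ideal.span (Set.range w) = maximalIdeal R) (hreg : IsRegular R (List.ofFn w)) :
    ringKrullDim R = n := by
  have hfield : ringKrullDim (R ⧸ maximalIdeal R) = 0 :=
    ringKrullDim_eq_zero_of_field (ResidueField R)
  rw [← ringKrullDim_add_length_eq_ringKrullDim_of_isRegular _ hreg, ofList_ofFn, hw, hfield,
    List.length_ofFn, zero_add]

lemma isRegularLocal_of_isRegular_of_span_range_eq_maximalIdeal {R : Type} [CommRing R]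
    [IsLocalRing R] [IsNoetherianRing R] {n : ℕ} {w : Fin n → R}
    (hw : Ideal.span (Set.range w) = maximalIdeal R) (hreg : IsRegular R (List.ofFn w)) :
    IsRegularLocal R := by
  have hdim := ringKrullDim_eq_of_isRegular_of_span_range_eq_maximalIdeal hw hreg
  refine ⟨inferInstance, le_antisymm ?_ ?_⟩
  · rw [hdim]
    exact Nat.cast_le.2 (Nat.sInf_le ⟨w, hw⟩)
  · exact (ringKrullDim_le_spanFinrank_maximalIdeal R).trans
      (by exact_mod_cast spanFinrank_maximalIdeal_le_edim R)

lemma exists_maximalIdeal_pow_le_of_isRegular {R : Type*} [CommRing R] [IsLocalRing R]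
    [IsNoetherianRing R] {n : ℕ} (hdim : ringKrullDim R = n) {y : Fin n → R}
    (hreg : IsRegular R (List.ofFn y)) :
    ∃ k, maximalIdeal R ^ k ≤ Ideal.span (Set.range y) := by
  have hadd := ringKrullDim_add_length_eq_ringKrullDim_of_isRegular _ hreg
  rw [ofList_ofFn, hdim, List.length_ofFn] at hadd
  have hle : ringKrullDim (R ⧸ Ideal.span (Set.range y)) ≤ (0 : ℕ) :=
    ENat.WithBot.add_le_add_natCast_right_iff.1 (by rw [hadd, Nat.cast_zero, zero_add])
  have : IsArtinianRing (R ⧸ Ideal.span (Set.range y)) :=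
    isArtinianRing_iff_isNoetherianRing_krullDimLE_zero.2
      ⟨inferInstance, (Ring.krullDimLE_iff (n := 0)).2 hle⟩
  exact exists_maximalIdeal_pow_le_of_isArtinianRing_quotient _

end Dimension

section CompleteIntersection

open RingTheory.Sequence

lemma IsCompleteIntersectionDimZero.of_ringEquiv {C D : Type} [CommRing C] [CommRing D]
    (h : IsCompleteIntersectionDimZero C) (e : C ≃+* D) : IsCompleteIntersectionDimZero D := by
  obtain ⟨R, _, _, hR, f, hf, c, y, hc, hy, hker⟩ := h
  refine ⟨R, _, _, hR, (e : C →+* D).comp f, e.surjective.comp hf, c, y, hc, hy, ?_⟩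
  rw [← hker]
  exact RingHom.ker_equiv_comp f e

lemma det_mul_mem_span_range_mulVec {κ A : Type*} [Fintype κ] [DecidableEq κ] [CommRing A]
    (U : Matrix κ κ A) {u : κ → A} {r : A} (hr : r ∈ Ideal.span (Set.range u)) :
    r * U.det ∈ Ideal.span (Set.range (U.mulVec u)) := by
  have hadj : U.adjugate.mulVec (U.mulVec u) = U.det • u := by
    rw [Matrix.mulVec_mulVec, Matrix.adjugate_mul, Matrix.smul_mulVec, Matrix.one_mulVec]
  obtain ⟨c, rfl⟩ := Ideal.mem_span_range_iff_exists_fun.1 hr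
  rw [Finset.sum_mul]
  refine sum_mem fun j _ => ?_
  have hj : U.det * u j ∈ Ideal.span (Set.range (U.mulVec u)) :=
    span_range_mulVec_le U.adjugate _ (Ideal.subset_span ⟨j, congrFun hadj j⟩)
  rw [mul_assoc, mul_comm (u j)]
  exact Ideal.mul_mem_left _ _ hj

lemma exists_smul_notMem_forall_smul_mem {R M : Type*} [CommRing R] [AddCommGroup M] [Module R M]
    {m : Ideal R} {N : Submodule R M} {v : M} (hv : v ∉ N) {k : ℕ} (hk : ∀ c ∈ m ^ k, c • v ∈ N) :
    ∃ c : R, c • v ∉ N ∧ ∀ r ∈ m, r • c • v ∈ N := by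
  induction k with
  | zero => exact absurd (by simpa using hk 1 (by simp)) hv
  | succ k ih =>
    by_cases hkv : ∀ c ∈ m ^ k, c • v ∈ N
    · exact ih hkv
    · push Not at hkv
      obtain ⟨c, hc, hcv⟩ := hkv
      refine ⟨c, hcv, fun r hr => ?_⟩
      rw [smul_smul]
      exact hk _ (pow_succ' m k ▸ Ideal.mul_mem_mul hr hc)

lemma HasSimpleSocle.ker_eq {R S : Type*} [CommRing R] [IsLocalRing R] [CommRing S] {J : Ideal R}
    (hJ : HasSimpleSocle J) {k : ℕ} (hk : maximalIdeal R ^ k ≤ J) {h : R →+* S}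
    (hJh : J ≤ RingHom.ker h) {δ : R} (hδ : ∀ r ∈ maximalIdeal R, r * δ ∈ J) (hδ0 : h δ ≠ 0) :
    RingHom.ker h = J := by
  refine le_antisymm (fun q hq => ?_) hJh
  by_contra hqJ
  obtain ⟨a, haJ, ha⟩ :=
    exists_smul_notMem_forall_smul_mem hqJ fun c hc => J.mul_mem_right q (hk hc)
  obtain ⟨c, hc⟩ := hJ (a • q) δ haJ ha hδ
  refine hδ0 ?_
  have hhc : h (δ - c * a • q) = 0 := hJh hc
  simpa [RingHom.mem_ker.1 hq] using hhc

lemma hasSimpleSocle_comap_iff {R S : Type*} [CommRing R] [IsLocalRing R] [CommRing S]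
    [IsLocalRing S] {f : R →+* S} (hf : Function.Surjective f) {J : Ideal S} :
    HasSimpleSocle (J.comap f) ↔ HasSimpleSocle J := by
  have hmax (a : R) : (∀ r ∈ maximalIdeal R, r * a ∈ J.comap f) ↔
      ∀ r ∈ maximalIdeal S, r * f a ∈ J := by
    have := hf.isLocalHom
    simp [hf.forall, mem_maximalIdeal, mem_nonunits_iff, isUnit_map_iff]
  simp only [HasSimpleSocle, hmax]
  simp [hf.forall, hf.exists]

lemma exists_notMem_sup_maximalIdeal_pow {A : Type*} [CommRing A] [IsLocalRing A]
    [IsNoetherianRing A] {I : Ideal A} {a : A} (ha : a ∉ I) :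
    ∃ s, a ∉ I ⊔ maximalIdeal A ^ s := by
  have hbot : Submodule.mkQ I a ∉ (⨅ i, maximalIdeal A ^ i • ⊤ : Submodule A (A ⧸ I)) := by
    rw [Ideal.iInf_pow_smul_eq_bot_of_isLocalRing _ Ideal.IsPrime.ne_top']
    rwa [Submodule.mem_bot, Submodule.mkQ_apply, Submodule.Quotient.mk_eq_zero]
  obtain ⟨s, hs⟩ := not_forall.1 (mt (Submodule.mem_iInf _).2 hbot)
  refine ⟨s, fun h => hs ?_⟩
  have hmap : (maximalIdeal A ^ s • ⊤ : Submodule A A).map I.mkQ = maximalIdeal A ^ s • ⊤ := by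
    rw [Submodule.map_smul'', Submodule.map_top, Submodule.range_mkQ]
  rw [← hmap, ← Submodule.mem_comap, Submodule.comap_map_mkQ]
  simpa using h

lemma det_sub_det_mem {κ A : Type*} [Fintype κ] [DecidableEq κ] [CommRing A] {I : Ideal A}
    {B U : Matrix κ κ A} (h : ∀ i j, B i j - U i j ∈ I) : B.det - U.det ∈ I := by
  have hmap : (Ideal.Quotient.mk I).mapMatrix B = (Ideal.Quotient.mk I).mapMatrix U := by
    ext i j
    exact Ideal.Quotient.eq.2 (h i j)
  rw [← Ideal.Quotient.eq, RingHom.map_det, hmap, RingHom.map_det]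

lemma exists_isRegular_hasSimpleSocle_cover.{u} {C : Type u} [CommRing C] [IsLocalRing C]
    (hnil : IsNilpotent (maximalIdeal C)) {n : ℕ} {u : Fin n → C}
    (hu : Ideal.span (Set.range u) = maximalIdeal C) (U : Matrix (Fin n) (Fin n) C) (s : ℕ) :
    ∃ (R : Type u) (_ : CommRing R) (_ : IsLocalRing R) (_ : IsNoetherianRing R) (f : R →+* C)
      (w : Fin n → R) (B : Matrix (Fin n) (Fin n) R), Function.Surjective f ∧
      Ideal.span (Set.range w) = maximalIdeal R ∧ IsRegular R (List.ofFn w) ∧ f ∘ w = u ∧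
      IsRegular R (List.ofFn (B.mulVec w)) ∧ HasSimpleSocle (Ideal.span (Set.range (B.mulVec w))) ∧
      ∀ i j, f (B i j) - U i j ∈ maximalIdeal C ^ s := by
  obtain ⟨R, _, _, _, f, w, hf, hw, hreg, hfw⟩ := exists_isRegular_cover hnil hu
  choose lift hlift using id hf
  obtain ⟨B, hB, hregB, hsoc⟩ :=
    exists_isRegular_hasSimpleSocle_mulVec hw hreg (Matrix.of fun i j => lift (U i j)) s
  refine ⟨R, _, _, inferInstance, f, w, B, hf, hw, hreg, funext hfw, hregB, hsoc, fun i j => ?_⟩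
  rw [← map_maximalIdeal_of_surjective f hf, ← Ideal.map_pow]
  simpa [hlift] using Ideal.mem_map_of_mem f (hB i j)

lemma mulVec_eq_mulVec_of_sub_mem_maximalIdeal_pow {C : Type*} [CommRing C] [IsLocalRing C] {s : ℕ}
    (hs : maximalIdeal C ^ (s + 1) = ⊥) {n : ℕ} {u : Fin n → C}
    (hu : ∀ i, u i ∈ maximalIdeal C) {B U : Matrix (Fin n) (Fin n) C}
    (h : ∀ i j, B i j - U i j ∈ maximalIdeal C ^ s) : B.mulVec u = U.mulVec u := by
  rw [← sub_eq_zero, ← Matrix.sub_mulVec]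
  funext i
  rw [Pi.zero_apply, ← Ideal.mem_bot, ← hs, pow_succ]
  simp only [Matrix.mulVec, dotProduct, Matrix.sub_apply]
  exact sum_mem fun j _ => Ideal.mul_mem_mul (h i j) (hu j)

theorem isCompleteIntersectionDimZero_of_pow_maximalIdeal_eq_bot {C : Type} [CommRing C]
    [IsLocalRing C] {n : ℕ} {u : Fin n → C} {U : Matrix (Fin n) (Fin n) C}
    (hu : Ideal.span (Set.range u) = maximalIdeal C) {s : ℕ} (hs : maximalIdeal C ^ (s + 1) = ⊥)
    (hdet : U.det ∉ Ideal.span (Set.range (U.mulVec u)) ⊔ maximalIdeal C ^ s) :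
    IsCompleteIntersectionDimZero (C ⧸ Ideal.span (Set.range (U.mulVec u))) ∧
      maximalIdeal C ^ s ≤ Ideal.span (Set.range (U.mulVec u)) ∧
      HasSimpleSocle (Ideal.span (Set.range (U.mulVec u))) := by
  set I := Ideal.span (Set.range (U.mulVec u)) with hI
  obtain ⟨R, _, _, _, f, w, B, hf, hw, hreg, rfl, hregB, hsoc, hB⟩ :=
    exists_isRegular_hasSimpleSocle_cover ⟨s + 1, hs⟩ hu U s
  set J := Ideal.span (Set.range (B.mulVec w)) with hJ
  have hdim := ringKrullDim_eq_of_isRegular_of_span_range_eq_maximalIdeal hw hreg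
  have hmap : J.map f = I := by
    have hBU : (f.mapMatrix B).mulVec (f ∘ w) = U.mulVec (f ∘ w) :=
      mulVec_eq_mulVec_of_sub_mem_maximalIdeal_pow hs
        (fun i => hu ▸ Ideal.subset_span (Set.mem_range_self i)) hB
    rw [hI, hJ, Ideal.map_span, ← Set.range_comp, ← hBU]
    exact congrArg (Ideal.span ∘ Set.range) (funext fun i => RingHom.map_mulVec f B w i)
  have hcomap : (I ⊔ maximalIdeal C ^ s).comap f = J := by
    obtain ⟨k, hk⟩ := exists_maximalIdeal_pow_le_of_isRegular hdim hregB
    have hker : RingHom.ker ((Ideal.Quotient.mk (I ⊔ maximalIdeal C ^ s)).comp f) =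
        (I ⊔ maximalIdeal C ^ s).comap f := by
      rw [← RingHom.comap_ker, Ideal.mk_ker]
    rw [← hker]
    refine hsoc.ker_eq hk ?_ (fun r hr => det_mul_mem_span_range_mulVec B (hw ▸ hr)) fun h0 => ?_
    · rw [hker, ← Ideal.map_le_iff_le_comap, hmap]
      exact le_sup_left
    · rw [← RingHom.mem_ker, hker, Ideal.mem_comap, RingHom.map_det] at h0
      refine hdet ?_
      simpa using sub_mem h0 (le_sup_right (a := I) (det_sub_det_mem (B := f.mapMatrix B) hB))
  have hsI : I ⊔ maximalIdeal C ^ s = I := by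
    rw [← Ideal.map_comap_of_surjective f hf (I ⊔ maximalIdeal C ^ s), hcomap, hmap]
  rw [hsI] at hcomap
  refine ⟨⟨R, _, _, isRegularLocal_of_isRegular_of_span_range_eq_maximalIdeal hw hreg,
    (Ideal.Quotient.mk I).comp f, Ideal.Quotient.mk_surjective.comp hf, n, _, hdim.symm, hregB, ?_⟩,
    sup_eq_left.1 hsI, (hasSimpleSocle_comap_iff hf).1 (hcomap ▸ hsoc)⟩
  rw [← RingHom.comap_ker, Ideal.mk_ker, hcomap]

theorem isCompleteIntersectionDimZero_of_det_notMem {A : Type} [CommRing A] [IsLocalRing A]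
    [IsNoetherianRing A] {n : ℕ} {u : Fin n → A} {U : Matrix (Fin n) (Fin n) A}
    (hu : Ideal.span (Set.range u) = maximalIdeal A)
    (hdet : U.det ∉ Ideal.span (Set.range (U.mulVec u))) :
    IsCompleteIntersectionDimZero (A ⧸ Ideal.span (Set.range (U.mulVec u))) ∧
      (∃ s, maximalIdeal A ^ s ≤ Ideal.span (Set.range (U.mulVec u))) ∧
      HasSimpleSocle (Ideal.span (Set.range (U.mulVec u))) := by
  set I := Ideal.span (Set.range (U.mulVec u)) with hI
  obtain ⟨s, hs⟩ := exists_notMem_sup_maximalIdeal_pow hdet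
  let π := Ideal.Quotient.mk (maximalIdeal A ^ (s + 1))
  have hπ : Function.Surjective π := Ideal.Quotient.mk_surjective
  have : Nontrivial (A ⧸ maximalIdeal A ^ (s + 1)) :=
    Ideal.Quotient.nontrivial_iff.2
      (ne_top_of_le_ne_top Ideal.IsPrime.ne_top' (Ideal.pow_le_self s.succ_ne_zero))
  have : IsLocalRing (A ⧸ maximalIdeal A ^ (s + 1)) := .of_surjective' π hπ
  have hmax := map_maximalIdeal_of_surjective π hπ
  have hIC : I.map π = Ideal.span (Set.range ((π.mapMatrix U).mulVec (π ∘ u))) := by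
    rw [hI, Ideal.map_span, ← Set.range_comp]
    exact congrArg (Ideal.span ∘ Set.range) (funext fun i => RingHom.map_mulVec π U u i)
  have hcomap (J : Ideal A) : (J.map π).comap π = J ⊔ maximalIdeal A ^ (s + 1) := by
    rw [Ideal.comap_map_of_surjective' π hπ, Ideal.mk_ker]
  obtain ⟨hCI, hsC, hsoc⟩ := isCompleteIntersectionDimZero_of_pow_maximalIdeal_eq_bot
    (u := π ∘ u) (U := π.mapMatrix U) (s := s)
    (by rw [Set.range_comp, ← Ideal.map_span, hu, hmax])
    (by rw [← hmax, ← Ideal.map_pow, Ideal.map_quotient_self])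
    (by
      rw [← hIC, ← hmax, ← Ideal.map_pow, ← Ideal.map_sup, ← RingHom.map_det, ← Ideal.mem_comap,
        hcomap, sup_assoc,
        sup_eq_left.2 (Ideal.pow_le_pow_right s.le_succ : maximalIdeal A ^ (s + 1) ≤ _)]
      exact hs)
  rw [← hIC] at hCI hsC hsoc
  have hsI : maximalIdeal A ^ s ≤ I := by
    refine Submodule.le_of_le_smul_of_le_jacobson_bot (IsNoetherian.noetherian _)
      (maximalIdeal_le_jacobson _) ?_
    rw [smul_eq_mul, ← pow_succ', ← hcomap, ← Ideal.map_le_iff_le_comap, Ideal.map_pow, hmax]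
    exact hsC
  have hle : maximalIdeal A ^ (s + 1) ≤ I := (Ideal.pow_le_pow_right s.le_succ).trans hsI
  refine ⟨hCI.of_ringEquiv (DoubleQuot.quotQuotEquivQuotOfLE hle), ⟨s, hsI⟩, ?_⟩
  rwa [← hasSimpleSocle_comap_iff hπ, hcomap, sup_eq_left.2 hle] at hsoc

end CompleteIntersection

section Freeness

variable {ι A M F : Type*} [CommRing A] [AddCommGroup M] [Module A M] [AddCommGroup F] [Module A F]

lemma finsupp_mem_smul_top_iff {I : Ideal A} {z : ι →₀ A} :
    z ∈ I • (⊤ : Submodule A (ι →₀ A)) ↔ ∀ i, z i ∈ I := by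
  constructor
  · intro hz i
    have hle : I • (⊤ : Submodule A (ι →₀ A)) ≤
        Submodule.comap (Finsupp.lapply i : (ι →₀ A) →ₗ[A] A) I :=
      Submodule.smul_le.2 fun r hr v _ => I.mul_mem_right (v i) hr
    exact hle hz
  · intro hz
    rw [← z.sum_single]
    refine sum_mem fun i _ => ?_
    rw [← mul_one (z i), ← smul_eq_mul, ← Finsupp.smul_single]
    exact Submodule.smul_mem_smul (hz i) Submodule.mem_top

lemma exists_finsupp_linearMap_comap_smul_top_le.{v} [IsLocalRing A] (M : Type v) [AddCommGroup M]
    [Module A M] : ∃ (ι : Type v) (φ : (ι →₀ A) →ₗ[A] M),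
      (maximalIdeal A • ⊤ : Submodule A M).comap φ ≤ maximalIdeal A • ⊤ ∧
      LinearMap.range φ ⊔ maximalIdeal A • ⊤ = ⊤ := by
  let π := Ideal.Quotient.mk (maximalIdeal A)
  let _ : Field (A ⧸ maximalIdeal A) := Ideal.Quotient.field _
  let b := Module.Free.chooseBasis (A ⧸ maximalIdeal A) (M ⧸ (maximalIdeal A • ⊤ : Submodule A M))
  choose e he using fun j => Submodule.mkQ_surjective _ (b j)
  let φ := Finsupp.linearCombination A e
  have hφ (a : _ →₀ A) : Submodule.mkQ _ (φ a) =
      Finsupp.linearCombination _ b (a.mapRange π (map_zero π)) := by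
    simp only [φ, Finsupp.linearCombination_apply, map_finsuppSum, map_smul, he]
    rw [Finsupp.sum_mapRange_index (by simp)]
    rfl
  refine ⟨_, φ, fun a ha => finsupp_mem_smul_top_iff.2 fun i => ?_, eq_top_iff.2 fun z _ => ?_⟩
  · rw [Submodule.mem_comap, ← Submodule.Quotient.mk_eq_zero, ← Submodule.mkQ_apply, hφ] at ha
    have hi := DFunLike.congr_fun (linearIndependent_iff.1 b.linearIndependent _ ha) i
    exact Ideal.Quotient.eq_zero_iff_mem.1 (by simpa using hi)
  · obtain ⟨a, ha⟩ := Finsupp.mapRange_surjective π (map_zero π) Ideal.Quotient.mk_surjective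
      (b.repr (Submodule.mkQ _ z))
    refine Submodule.mem_sup.2 ⟨φ a, ⟨a, rfl⟩, z - φ a, ?_, by abel⟩
    rw [← Submodule.Quotient.mk_eq_zero, ← Submodule.mkQ_apply, map_sub, hφ, ha,
      b.linearCombination_repr, sub_self]

lemma HasSimpleSocle.comap_smul_top_le [IsLocalRing A] {I : Ideal A} (hI : HasSimpleSocle I)
    {k : ℕ} (hk : maximalIdeal A ^ k ≤ I) {δ : A} (hδI : δ ∉ I)
    (hδ : ∀ r ∈ maximalIdeal A, r * δ ∈ I)
    (hM : ∀ m : M, δ • m ∈ I • (⊤ : Submodule A M) → m ∈ maximalIdeal A • (⊤ : Submodule A M))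
    {φ : (ι →₀ A) →ₗ[A] M}
    (hφ : (maximalIdeal A • ⊤ : Submodule A M).comap φ ≤ maximalIdeal A • ⊤) :
    (I • ⊤ : Submodule A M).comap φ ≤ I • ⊤ := by
  intro a ha
  by_contra haI
  obtain ⟨c, hcI, hc⟩ := exists_smul_notMem_forall_smul_mem haI
    fun r hr => Submodule.smul_mem_smul (hk hr) Submodule.mem_top
  have hca : c • a ∈ (I ⊔ Ideal.span {δ}) • (⊤ : Submodule A (ι →₀ A)) :=
    finsupp_mem_smul_top_iff.2 fun i => mem_sup_span_singleton_iff.2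
      (hI δ _ hδI hδ fun r hr => finsupp_mem_smul_top_iff.1 (hc r hr) i)
  rw [Submodule.sup_smul, Submodule.ideal_span_singleton_smul] at hca
  obtain ⟨z, hz, _, ⟨b, -, rfl⟩, hzb⟩ := Submodule.mem_sup.1 hca
  have hδb : δ • φ b ∈ I • (⊤ : Submodule A M) := by
    have heq : δ • φ b = c • φ a - φ z := by
      rw [← map_smul, ← map_smul, ← hzb, map_add]
      exact (add_sub_cancel_left _ _).symm
    rw [heq]
    exact sub_mem (Submodule.smul_mem _ c ha) (Submodule.smul_top_le_comap_smul_top I φ hz)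
  have hb := finsupp_mem_smul_top_iff.1 (hφ (hM _ hδb))
  refine hcI (hzb ▸ add_mem hz (finsupp_mem_smul_top_iff.2 fun i => ?_))
  simpa [mul_comm] using hδ _ (hb i)

lemma IsIndependentOn.comap_span_range_sq_smul_top_le {κ : Type*} [Fintype κ] {x : κ → A}
    (hind : IsIndependentOn M x) {φ : F →ₗ[A] M}
    (hφ : (Ideal.span (Set.range x) • ⊤ : Submodule A M).comap φ ≤
      Ideal.span (Set.range x) • ⊤) :
    (Ideal.span (Set.range x) ^ 2 • ⊤ : Submodule A M).comap φ ≤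
      Ideal.span (Set.range x) ^ 2 • ⊤ := by
  intro a ha
  rw [pow_two, Submodule.mul_smul] at ha ⊢
  obtain ⟨m, hm, hma⟩ := (mem_span_range_smul_iff_exists_sum _ _ _).1 ha
  have haI : a ∈ Ideal.span (Set.range x) • (⊤ : Submodule A F) :=
    hφ (Submodule.mem_comap.2 (Submodule.smul_le_right (Submodule.mem_comap.1 ha)))
  obtain ⟨f, -, rfl⟩ := (mem_span_range_smul_iff_exists_sum _ _ _).1 haI
  have hrel : ∑ i, x i • (φ (f i) - m i) = 0 := by
    simp [smul_sub, hma]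
  refine (mem_span_range_smul_iff_exists_sum _ _ _).2 ⟨f, fun i => hφ ?_, rfl⟩
  simpa using add_mem (hind _ hrel i) (hm i)

lemma free_quotient_smul_top [Module.Free A F] {I : Ideal A} {φ : F →ₗ[A] M}
    (hφ : (I • ⊤ : Submodule A M).comap φ ≤ I • ⊤) (hrange : LinearMap.range φ ⊔ I • ⊤ = ⊤) :
    Module.Free (A ⧸ I) (M ⧸ (I • ⊤ : Submodule A M)) := by
  let e : (F ⧸ (I • ⊤ : Submodule A F)) ≃ₗ[A] M ⧸ (I • ⊤ : Submodule A M) :=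
    LinearEquiv.ofBijective
      (Submodule.mapQ _ _ φ (Submodule.smul_top_le_comap_smul_top I φ)) ⟨by
        rw [← LinearMap.ker_eq_bot, Submodule.mapQ, Submodule.ker_liftQ_eq_bot]
        simpa [LinearMap.ker_comp] using hφ, by
        rw [← LinearMap.range_eq_top, Submodule.range_mapQ, Submodule.map_mkQ_eq_top, sup_comm,
          hrange]⟩
  exact Module.Free.of_equiv ((TensorProduct.quotTensorEquivQuotSMul F I ≪≫ₗ e)
    |>.extendScalarsOfSurjective Ideal.Quotient.mk_surjective)

end Freeness

theorem complete_intersection_of_independent_general {A : Type} [CommRing A] [IsLocalRing A]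
    [IsNoetherianRing A] {M : Type*} [AddCommGroup M] [Module A M]
    (hM : maximalIdeal A • (⊤ : Submodule A M) ≠ ⊤) {n : ℕ} {x : Fin n → A}
    (hxm : ∀ i, x i ∈ maximalIdeal A) (hn : n = edim A) (hind : IsIndependentOn M x) :
    IsCompleteIntersectionDimZero (A ⧸ Ideal.span (Set.range x)) ∧
    Module.Free (A ⧸ (Ideal.span (Set.range x) ^ 2))
      (M ⧸ ((Ideal.span (Set.range x) ^ 2) • ⊤ : Submodule A M)) := by
  subst hn
  obtain ⟨u, hu⟩ := exists_span_range_eq_maximalIdeal A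
  choose U hU using fun i => Ideal.mem_span_range_iff_exists_fun.1 (hu ▸ hxm i)
  obtain rfl : (Matrix.of U).mulVec u = x := funext hU
  have hdetM (m : M) (hm : (Matrix.of U).det • m ∈ Ideal.span (Set.range _) • ⊤) :
      m ∈ maximalIdeal A • (⊤ : Submodule A M) := hu ▸ hind.mem_smul_top_of_det_smul_mem hm
  have hdet : (Matrix.of U).det ∉ Ideal.span (Set.range ((Matrix.of U).mulVec u)) := fun h =>
    hM (eq_top_iff.2 fun m _ => hdetM m (Submodule.smul_mem_smul h Submodule.mem_top))
  obtain ⟨hCI, ⟨k, hk⟩, hsoc⟩ := isCompleteIntersectionDimZero_of_det_notMem hu hdet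
  obtain ⟨ι, φ, hφ, hrange⟩ := exists_finsupp_linearMap_comap_smul_top_le (A := A) M
  have hφI := hsoc.comap_smul_top_le hk hdet
    (fun r hr => det_mul_mem_span_range_mulVec _ (hu ▸ hr)) hdetM hφ
  refine ⟨hCI, free_quotient_smul_top (hind.comap_span_range_sq_smul_top_le hφI) ?_⟩
  refine top_le_iff.1 ((sup_pow_smul_top_eq_top hrange (k * 2)).ge.trans ?_)
  rw [pow_mul]
  exact sup_le_sup_left (Submodule.smul_mono_left (Ideal.pow_right_mono hk 2)) _

/-- If there exists an `M`-independent sequence of length `edim A` in `𝔪`, then `A/I` is a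
complete intersection of dimension zero and `M/I²M` is free over `A/I²`, where
`I = (x₁,…,xₙ)`. -/
theorem complete_intersection_of_independent
    {A : Type} [CommRing A] [IsLocalRing A] [IsNoetherianRing A]
    {M : Type} [AddCommGroup M] [Module A M] [Module.Finite A M] [Nontrivial M]
    {n : ℕ} (x : Fin n → A) (hxm : ∀ i, x i ∈ maximalIdeal A)
    (hn : n = edim A)
    (hind : ∀ m : Fin n → M, (∑ i, x i • m i) = 0 →
      ∀ i, m i ∈ Ideal.span (Set.range x) • (⊤ : Submodule A M)) :
    IsCompleteIntersectionDimZero (A ⧸ Ideal.span (Set.range x)) ∧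
    Module.Free (A ⧸ (Ideal.span (Set.range x) ^ 2))
      (M ⧸ ((Ideal.span (Set.range x) ^ 2) • ⊤ : Submodule A M)) :=
  complete_intersection_of_independent_general
    (fun h => top_ne_bot (Submodule.eq_bot_of_le_smul_of_le_jacobson_bot _ _
      Module.Finite.fg_top h.ge (maximalIdeal_le_jacobson _))) hxm hn hind
end
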